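/- arXiv:2407.12713 — 5 statements merged into one kernel-verified Lean document; each statement's English description precedes it below -/
import Mathlib

section
/- Let X be a finite set, let K : X × X → ℝ be a Markov transition kernel (K(x,y) ≥ 0 for all x,y and Σ_y K(x,y) = 1 for all x), and let π be a stationary probability distribution for K with π(y) > 0 for every y ∈ X. Assume moreover that K is reversible with respect to π, i.e., π(x)K(x,y) = π(y)K(y,x) for all x,y ∈ X. Then for every x ∈ X and every integer r ≥ 0, one has 4·‖K_x^r − π‖_TV² ≤ K^{2r}(x,x)/π(x) − 1, where K^r denotes the r-step transition kernel and K_x^r is the probability distribution K^r(x,·). -/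
/-!
By the Cauchy–Schwarz inequality, `4‖μ − π‖_TV²` is at most the χ²-divergence
`∑ y, (μ y − π y)² / π y = ∑ y, μ y² / π y − 1`. For `μ = K^r(x, ·)`, detailed balance (inherited by
`K^r`) turns `K^r(x,y)² / π y` into `K^r(x,y) K^r(y,x) / π x`, and summing over `y` gives the return
probability `K^{2r}(x,x) / π x`.
-/

open Finset

/-- The total variation distance between two probability distributions on a finite set:
`‖P − Q‖_TV = (1/2)·Σ_x |P x − Q x|`. -/
noncomputable def tvDist {X : Type*} [Fintype X] (P Q : X → ℝ) : ℝ :=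
  (1 / 2) * ∑ x, |P x - Q x|

section ChiSquare

variable {X : Type*} [Fintype X] {μ π : X → ℝ}

/-- The χ²-divergence of `μ` from `π`. Because `a / 0 = 0`, points where `π` vanishes contribute
nothing, so this is the usual notion only when `μ` vanishes wherever `π` does. -/
noncomputable def chiSqDiv (μ π : X → ℝ) : ℝ :=
  ∑ y, (μ y - π y) ^ 2 / π y

theorem chiSqDiv_eq_sum_sq_div_sub_add (hμπ : ∀ y, π y = 0 → μ y = 0) :
    chiSqDiv μ π = ∑ y, μ y ^ 2 / π y - 2 * ∑ y, μ y + ∑ y, π y := by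
  have expand_term (y : X) : (μ y - π y) ^ 2 / π y = μ y ^ 2 / π y - 2 * μ y + π y := by
    obtain hy | hy := eq_or_ne (π y) 0
    · simp [hy, hμπ y hy]
    · field_simp
      ring
  simp only [chiSqDiv, expand_term, sum_add_distrib, sum_sub_distrib, mul_sum]

theorem four_mul_tvDist_sq_le_sum_mul_chiSqDiv (hπ : ∀ y, 0 ≤ π y)
    (hμπ : ∀ y, π y = 0 → μ y = 0) :
    4 * tvDist μ π ^ 2 ≤ (∑ y, π y) * chiSqDiv μ π := by
  have sq_abs_sub_eq (y : X) : |μ y - π y| ^ 2 = π y * ((μ y - π y) ^ 2 / π y) := by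
    rw [sq_abs, mul_div_cancel_of_imp']
    intro hy
    simp [hy, hμπ y hy]
  calc 4 * tvDist μ π ^ 2
      = (∑ y, |μ y - π y|) ^ 2 := by rw [tvDist]; ring
    _ ≤ (∑ y, π y) * chiSqDiv μ π :=
        sum_sq_le_sum_mul_sum_of_sq_le_mul univ (fun y _ => hπ y)
          (fun y _ => div_nonneg (sq_nonneg _) (hπ y)) (fun y _ => (sq_abs_sub_eq y).le)

end ChiSquare

theorem pow_mulVec_eq_of_mulVec_eq {X R : Type*} [Fintype X] [DecidableEq X] [Semiring R]
    {K : Matrix X X R} {v : X → R} (hv : K.mulVec v = v) (r : ℕ) : (K ^ r).mulVec v = v := by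
  induction r with
  | zero => rw [pow_zero, Matrix.one_mulVec]
  | succ r ih => rw [pow_succ, ← Matrix.mulVec_mulVec, hv, ih]

theorem sum_pow_row_eq_one {X R : Type*} [Fintype X] [DecidableEq X] [Semiring R]
    {K : Matrix X X R} (hK : ∀ x, ∑ y, K x y = 1) (r : ℕ) (x : X) : ∑ y, (K ^ r) x y = 1 := by
  have ones_fixed : K.mulVec 1 = 1 := funext fun z => (dotProduct_one (K z)).trans (hK z)
  calc ∑ y, (K ^ r) x y
      = (K ^ r).mulVec 1 x := (dotProduct_one _).symm
    _ = 1 := by rw [pow_mulVec_eq_of_mulVec_eq ones_fixed, Pi.one_apply]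

/-- The detailed balance equations `π(x) K(x,y) = π(y) K(y,x)`, expressing that the kernel `K` is
reversible with respect to `π`. -/
def DetailedBalance {X R : Type*} [Mul R] (K : Matrix X X R) (π : X → R) : Prop :=
  ∀ x y, π x * K x y = π y * K y x

namespace DetailedBalance

variable {X R : Type*}

theorem iff_semiconjBy_diagonal [Fintype X] [DecidableEq X] [CommSemiring R]
    {K : Matrix X X R} {π : X → R} :
    DetailedBalance K π ↔ SemiconjBy (Matrix.diagonal π) K K.transpose := by
  simp only [DetailedBalance, SemiconjBy, ← Matrix.ext_iff, Matrix.diagonal_mul,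
    Matrix.mul_diagonal, Matrix.transpose_apply, mul_comm]

theorem pow [Fintype X] [DecidableEq X] [CommSemiring R] {K : Matrix X X R} {π : X → R}
    (h : DetailedBalance K π) (r : ℕ) : DetailedBalance (K ^ r) π := by
  rw [iff_semiconjBy_diagonal, Matrix.transpose_pow]
  exact (iff_semiconjBy_diagonal.mp h).pow_right r

theorem apply_eq_zero [MulZeroClass R] [NoZeroDivisors R] {K : Matrix X X R} {π : X → R}
    (h : DetailedBalance K π) {x y : X} (hx : π x ≠ 0) (hy : π y = 0) : K x y = 0 := by
  have : π x * K x y = 0 := by rw [h x y, hy, zero_mul]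
  exact (mul_eq_zero.mp this).resolve_left hx

theorem sum_sq_div_eq_mul_self_apply_div [Fintype X] [Field R] {K : Matrix X X R} {π : X → R}
    (h : DetailedBalance K π) {x : X} (hx : π x ≠ 0) :
    ∑ y, K x y ^ 2 / π y = (K * K) x x / π x := by
  rw [Matrix.mul_apply, sum_div]
  refine sum_congr rfl fun y _ => ?_
  obtain hy | hy := eq_or_ne (π y) 0
  · simp [hy, h.apply_eq_zero hx hy]
  · rw [div_eq_div_iff hy hx]
    linear_combination K x y * h x y

end DetailedBalance

theorem chiSqDiv_pow_row_eq_return_prob {X : Type*} [Fintype X] [DecidableEq X]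
    {K : Matrix X X ℝ} (hK : ∀ x, ∑ y, K x y = 1) {π : X → ℝ} (hπsum : ∑ y, π y = 1)
    (hrev : DetailedBalance K π) {x : X} (hx : π x ≠ 0) (r : ℕ) :
    chiSqDiv ((K ^ r) x) π = (K ^ (2 * r)) x x / π x - 1 := by
  rw [chiSqDiv_eq_sum_sq_div_sub_add fun _ => (hrev.pow r).apply_eq_zero hx,
    (hrev.pow r).sum_sq_div_eq_mul_self_apply_div hx, sum_pow_row_eq_one hK, hπsum, two_mul r,
    pow_add]
  ring

theorem tv_sq_le_return_prob_general {X : Type*} [Fintype X] [DecidableEq X]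
    {K : Matrix X X ℝ} (hK : ∀ x, ∑ y, K x y = 1) {π : X → ℝ} (hπ : ∀ y, 0 ≤ π y)
    (hπsum : ∑ y, π y = 1) (hrev : DetailedBalance K π) {x : X} (hx : π x ≠ 0) (r : ℕ) :
    4 * tvDist ((K ^ r) x) π ^ 2 ≤ (K ^ (2 * r)) x x / π x - 1 :=
  calc 4 * tvDist ((K ^ r) x) π ^ 2
      ≤ (∑ y, π y) * chiSqDiv ((K ^ r) x) π :=
        four_mul_tvDist_sq_le_sum_mul_chiSqDiv hπ fun _ => (hrev.pow r).apply_eq_zero hx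
    _ = (K ^ (2 * r)) x x / π x - 1 := by
        rw [hπsum, one_mul, chiSqDiv_pow_row_eq_return_prob hK hπsum hrev hx]

/-- **Proposition (general bound), part (ii).**  Let `K` be a Markov transition kernel on a
finite set `X` with stationary probability distribution `π` satisfying `π y > 0` for all `y`,
and assume `K` is reversible with respect to `π`, i.e. `π(x)K(x,y) = π(y)K(y,x)`.
Then for every starting state `x` and every `r ≥ 0`,
`4·‖K_x^r − π‖_TV² ≤ K^{2r}(x,x)/π(x) − 1`. -/
theorem tv_sq_le_return_prob {X : Type*} [Fintype X] [DecidableEq X]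
    (K : Matrix X X ℝ)
    (hKnonneg : ∀ x y, 0 ≤ K x y)
    (hKrow : ∀ x, ∑ y, K x y = 1)
    (π : X → ℝ)
    (hπpos : ∀ y, 0 < π y)
    (hπsum : ∑ y, π y = 1)
    (hπstat : ∀ y, ∑ x, π x * K x y = π y)
    (hrev : ∀ x y, π x * K x y = π y * K y x)
    (x : X) (r : ℕ) :
    4 * tvDist (fun y => (K ^ r) x y) π ^ 2 ≤ (K ^ (2 * r)) x x / π x - 1 :=
  tv_sq_le_return_prob_general hKrow (fun y => (hπpos y).le) hπsum hrev (hπpos x).ne' r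
end

section
/- Let q be a prime power and n ≥ 1, and let GU_n(q) be the group of isometries of a nondegenerate Hermitian form on F_{q^2}^n. Then for every integer k with 0 ≤ k ≤ n, the number of elements g ∈ GU_n(q) whose fixed space ker(g−1) has dimension k is at most (1 + q^{−(k+1)})·q^{n²−k²}; equivalently, this number is at most q^{n²−k²} + q^{n²−k²−k−1}. -/
noncomputable section

/-- The subgroup of `GL_m(E)` consisting of the invertible matrices preserving the
form `B` on `E^m`. -/
def formIsometry {E : Type} [Field E] {m : ℕ} (B : (Fin m → E) → (Fin m → E) → E) :
    Subgroup (Matrix (Fin m) (Fin m) E)ˣ where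
  carrier := {g | ∀ x y, B ((g : Matrix (Fin m) (Fin m) E).mulVec x)
    ((g : Matrix (Fin m) (Fin m) E).mulVec y) = B x y}
  one_mem' := by
    intro x y
    simp [Matrix.one_mulVec]
  mul_mem' := by
    intro a b ha hb x y
    simp only [Units.val_mul, ← Matrix.mulVec_mulVec]
    rw [ha, hb]
  inv_mem' := by
    intro g hg x y
    have := hg ((g⁻¹ : (Matrix (Fin m) (Fin m) E)ˣ).val.mulVec x)
      ((g⁻¹ : (Matrix (Fin m) (Fin m) E)ˣ).val.mulVec y)
    rw [Matrix.mulVec_mulVec, Matrix.mulVec_mulVec, ← Units.val_mul, mul_inv_cancel,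
      Units.val_one, Matrix.one_mulVec, Matrix.one_mulVec] at this
    exact this.symm

instance {E : Type} [Field E] [Fintype E] {m : ℕ}
    (B : (Fin m → E) → (Fin m → E) → E) : Fintype ↥(formIsometry B) :=
  Fintype.ofFinite _

/-- The dimension of the fixed space `ker(g−1)` of `g ∈ GL_m(E)` acting on `E^m`. -/
def fixdim {E : Type} [Field E] {m : ℕ} (g : (Matrix (Fin m) (Fin m) E)ˣ) : ℕ :=
  Module.finrank E (LinearMap.ker (Matrix.toLin' ((g : Matrix (Fin m) (Fin m) E) - 1)))

/-!
Let `w` be a vector of norm one. Every coset of isometries under the `q + 1` quasi-reflections along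
`w` contains exactly one isometry whose fixed space is not orthogonal to `w`, and for the others the
fixed space is smaller by one dimension. Put `Q = -q`, and let `m_j` be the average of
`Q ^ (j * dim ker (g - 1))` over the isometries `g` of an `n`-dimensional space. For `j ≤ n` these
cosets yield `m_1 = 0` and a recursion for `m_{j+2}` in terms of the same averages over the
stabilizers of vectors; the orbits of a pointwise stabilizer, counted by Witt's theorem, give the
second moment by Burnside's lemma, and the recursion becomes `m_{j+2} = (1 - Q ^ (j + 1)) m_j`.
Hence `(X - 1)(X - Q) ⋯ (X - Q ^ (j - 1))` has average `(-1) ^ j` at `X = Q ^ (dim ker (g - 1))`.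

The polynomial with `j = n` vanishes unless `g = 1`, which gives the order
`q ^ n ^ 2 * ∏ i ≤ n, (1 - Q⁻¹ ^ i)` of the group. The polynomial with `j = k` vanishes when the
fixed space has dimension below `k`. For even `k` it is nonnegative elsewhere and bounds the number
of isometries with a `k`-dimensional fixed space; for odd `k` it becomes so after multiplication by
`X - Q ^ (k + 1)`.
-/

section QuadraticFrobenius

/-- The field `K` has `q ^ 2` elements and `σ` is its automorphism `a ↦ a ^ q`. -/
structure IsQuadraticFrobenius {K : Type*} [Field K] (σ : K →+* K) (q : ℕ) : Prop where
  natCard_eq : Nat.card K = q ^ 2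
  apply_eq : ∀ a, σ a = a ^ q

lemma exists_isQuadraticFrobenius {K : Type*} [Field K] [Finite K] {q : ℕ}
    (hq : Nat.card K = q ^ 2) : ∃ σ : K →+* K, IsQuadraticFrobenius σ q := by
  have := Fintype.ofFinite K
  obtain ⟨p, _, m, hp, hm⟩ := FiniteField.card' K
  have : Fact p.Prime := ⟨hp⟩
  rw [← Nat.card_eq_fintype_card, hq] at hm
  obtain ⟨e, -, rfl⟩ := (Nat.dvd_prime_pow hp).1 (hm ▸ dvd_pow_self q two_ne_zero)
  exact ⟨iterateFrobenius K p e, hq, iterateFrobenius_def p e⟩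

namespace IsQuadraticFrobenius

variable {K : Type*} [Field K] {σ : K →+* K} {q : ℕ}

lemma ne_zero (hσ : IsQuadraticFrobenius σ q) : q ≠ 0 := by
  rintro rfl
  simpa using hσ.apply_eq 0

lemma finite (hσ : IsQuadraticFrobenius σ q) : Finite K :=
  Nat.finite_of_card_ne_zero (hσ.natCard_eq ▸ pow_ne_zero 2 hσ.ne_zero)

lemma two_le (hσ : IsQuadraticFrobenius σ q) : 2 ≤ q := by
  have := hσ.finite
  have hcard : 1 < q ^ 2 := hσ.natCard_eq ▸ Finite.one_lt_card
  exact (one_lt_sq_iff₀ q.zero_le).1 hcard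

lemma involutive (hσ : IsQuadraticFrobenius σ q) : Function.Involutive σ := fun a => by
  have := hσ.finite
  have := Fintype.ofFinite K
  rw [hσ.apply_eq, hσ.apply_eq, ← pow_mul, ← sq, ← hσ.natCard_eq, Nat.card_eq_fintype_card,
    FiniteField.pow_card]

lemma natCard_units (hσ : IsQuadraticFrobenius σ q) : Nat.card Kˣ = (q - 1) * (q + 1) := by
  rw [Nat.card_units, hσ.natCard_eq, mul_comm, ← Nat.sq_sub_sq, one_pow]

lemma natCard_ker_powMonoidHom_sub_one (hσ : IsQuadraticFrobenius σ q) :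
    Nat.card (powMonoidHom (q - 1) : Kˣ →* Kˣ).ker = q - 1 := by
  have := hσ.finite
  rw [IsCyclic.card_powMonoidHom_ker, hσ.natCard_units, Nat.gcd_mul_right_left]

lemma natCard_ker_powMonoidHom_add_one (hσ : IsQuadraticFrobenius σ q) :
    Nat.card (powMonoidHom (q + 1) : Kˣ →* Kˣ).ker = q + 1 := by
  have := hσ.finite
  rw [IsCyclic.card_powMonoidHom_ker, hσ.natCard_units, Nat.gcd_mul_left_left]

lemma range_powMonoidHom_add_one (hσ : IsQuadraticFrobenius σ q) :
    (powMonoidHom (q + 1) : Kˣ →* Kˣ).range = (powMonoidHom (q - 1) : Kˣ →* Kˣ).ker := by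
  have := hσ.finite
  refine Subgroup.eq_of_le_of_card_ge ?_ ?_
  · rintro _ ⟨a, rfl⟩
    rw [MonoidHom.mem_ker, powMonoidHom_apply, powMonoidHom_apply, ← pow_mul, mul_comm,
      ← hσ.natCard_units, pow_card_eq_one']
  · rw [hσ.natCard_ker_powMonoidHom_sub_one, IsCyclic.card_powMonoidHom_range, hσ.natCard_units,
      Nat.gcd_mul_left_left, Nat.mul_div_cancel _ q.succ_pos]

lemma apply_unit_eq_iff (hσ : IsQuadraticFrobenius σ q) (c : Kˣ) :
    σ c = c ↔ c ∈ (powMonoidHom (q - 1) : Kˣ →* Kˣ).ker := by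
  rw [MonoidHom.mem_ker, powMonoidHom_apply, hσ.apply_eq, ← Units.val_pow_eq_pow_val, Units.val_inj,
    ← pow_sub_one_mul hσ.ne_zero, mul_eq_right]

lemma exists_mul_self_eq (hσ : IsQuadraticFrobenius σ q) {c : K} (hc : σ c = c) :
    ∃ a, σ a * a = c := by
  rcases eq_or_ne c 0 with rfl | hc0
  · exact ⟨0, mul_zero _⟩
  lift c to Kˣ using hc0.isUnit
  rw [hσ.apply_unit_eq_iff, ← hσ.range_powMonoidHom_add_one] at hc
  obtain ⟨a, rfl⟩ := hc
  exact ⟨a, by simp [hσ.apply_eq, pow_succ]⟩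

lemma natCard_fixed (hσ : IsQuadraticFrobenius σ q) : Nat.card {c // σ c = c} = q := by
  have := hσ.finite
  have hfixed : {c | σ c = c} =
      insert 0 (Units.val '' ((powMonoidHom (q - 1) : Kˣ →* Kˣ).ker : Set Kˣ)) := by
    ext c
    rcases eq_or_ne c 0 with rfl | hc
    · simp
    · lift c to Kˣ using hc.isUnit
      rw [Set.mem_insert_iff, or_iff_right c.ne_zero, Units.val_injective.mem_set_image]
      exact hσ.apply_unit_eq_iff c
  have hcard : (Units.val '' ((powMonoidHom (q - 1) : Kˣ →* Kˣ).ker : Set Kˣ)).ncard = q - 1 := by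
    rw [Set.ncard_image_of_injective _ Units.val_injective]
    exact hσ.natCard_ker_powMonoidHom_sub_one
  change Nat.card ({c | σ c = c} : Set K) = q
  rw [Nat.card_coe_set_eq, hfixed, Set.ncard_insert_of_notMem, hcard,
    Nat.sub_add_cancel (Nat.one_le_of_lt hσ.two_le)]
  rintro ⟨c, -, hc⟩
  exact c.ne_zero hc

lemma exists_apply_ne (hσ : IsQuadraticFrobenius σ q) : ∃ a, σ a ≠ a := by
  by_contra! hfixed
  have hcard := hσ.natCard_fixed
  rw [Nat.card_congr (Equiv.subtypeUnivEquiv hfixed), hσ.natCard_eq] at hcard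
  nlinarith [hσ.two_le]

end IsQuadraticFrobenius

end QuadraticFrobenius

/-- The elements of norm one for the involution `σ`. -/
def normOneSubgroup {K : Type*} [Field K] (σ : K →+* K) : Subgroup Kˣ :=
  ((Units.map (σ : K →* K)) * MonoidHom.id Kˣ).ker

lemma mem_normOneSubgroup {K : Type*} [Field K] {σ : K →+* K} {a : Kˣ} :
    a ∈ normOneSubgroup σ ↔ σ a * a = 1 := by
  simp [normOneSubgroup, MonoidHom.mem_ker, Units.ext_iff]

lemma IsQuadraticFrobenius.natCard_normOneSubgroup {K : Type*} [Field K] {σ : K →+* K} {q : ℕ}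
    (hσ : IsQuadraticFrobenius σ q) : Nat.card (normOneSubgroup σ) = q + 1 := by
  rw [← hσ.natCard_ker_powMonoidHom_add_one]
  congr! 2
  ext a
  rw [mem_normOneSubgroup, MonoidHom.mem_ker, powMonoidHom_apply, hσ.apply_eq, pow_succ,
    Units.ext_iff, Units.val_mul, Units.val_pow_eq_pow_val, Units.val_one]

section Involution

variable {K : Type*} [Field K] {σ : K →+* K}

lemma exists_add_apply_ne_zero (hne : ∃ a, σ a ≠ a) : ∃ b, b + σ b ≠ 0 := by
  by_contra! htrace
  obtain ⟨a, ha⟩ := hne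
  have htwo : (1 : K) + 1 = 0 := by simpa using htrace 1
  exact ha (by linear_combination htrace a - a * htwo)

lemma exists_ne_zero_add_apply_eq (hσ : Function.Involutive σ) (hne : ∃ a, σ a ≠ a) {c : K}
    (hc : σ c = c) : ∃ b ≠ 0, b + σ b = c := by
  rcases eq_or_ne c 0 with rfl | hc0
  · obtain ⟨a, ha⟩ := hne
    exact ⟨σ a - a, sub_ne_zero.2 ha, by rw [map_sub, hσ]; ring⟩
  · obtain ⟨b, hb⟩ := exists_add_apply_ne_zero hne
    have hfixed : σ (b + σ b) = b + σ b := by rw [map_add, hσ, add_comm]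
    refine ⟨c / (b + σ b) * b, mul_ne_zero (div_ne_zero hc0 hb) ?_, ?_⟩
    · rintro rfl
      simp at hb
    · rw [map_mul, map_div₀, hc, hfixed, ← mul_add, div_mul_cancel₀ _ hb]

end Involution

section Orthogonality

variable {K V : Type*} [Field K] [AddCommGroup V] [Module K V] {σ : K →+* K}
  {B : V →ₛₗ[σ] V →ₗ[K] K} {U : Submodule K V}

lemma finrank_le_finrank_add_finrank_orthogonalBilin [FiniteDimensional K V]
    (B : V →ₛₗ[σ] V →ₗ[K] K) (U : Submodule K V) :
    Module.finrank K V ≤ Module.finrank K U + Module.finrank K (U.orthogonalBilin B) := by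
  let b := Module.finBasis K U
  let f : V →ₗ[K] Fin (Module.finrank K U) → K := LinearMap.pi fun i => B (b i)
  have hker : LinearMap.ker f ≤ U.orthogonalBilin B := fun y hy u hu => by
    have hy' : ∀ i, B (b i) y = 0 := congrFun (LinearMap.mem_ker.1 hy)
    have hsum : ∑ i, b.repr ⟨u, hu⟩ i • (b i : V) = u := by
      simpa only [Submodule.coe_sum, Submodule.coe_smul] using
        congrArg Subtype.val (b.sum_repr ⟨u, hu⟩)
    calc B u y = B (∑ i, b.repr ⟨u, hu⟩ i • (b i : V)) y := by rw [hsum]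
      _ = 0 := by simp [hy']
  calc Module.finrank K V
      = Module.finrank K (LinearMap.range f) + Module.finrank K (LinearMap.ker f) :=
        f.finrank_range_add_finrank_ker.symm
    _ ≤ Module.finrank K U + Module.finrank K (U.orthogonalBilin B) :=
        add_le_add (f.range.finrank_le.trans_eq (Module.finrank_fin_fun K))
          (Submodule.finrank_mono hker)

lemma surjective_of_separatingLeft [FiniteDimensional K V] (hσ : Function.Involutive σ)
    (hB : B.IsSymm) (hnd : B.SeparatingLeft) : Function.Surjective B := by
  have : RingHomSurjective σ := ⟨hσ.surjective⟩
  have hcoann : B.range.dualCoannihilator = ⊥ := by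
    refine (Submodule.eq_bot_iff _).2 fun x hx => hnd x fun y => hB.eq_iff.1 ?_
    exact (Submodule.mem_dualCoannihilator x).1 hx (B y) ⟨y, rfl⟩
  rw [← LinearMap.range_eq_top, ← Subspace.dualCoannihilator_dualAnnihilator_eq (W := B.range),
    hcoann, Submodule.dualAnnihilator_bot]

lemma apply_eq_zero_of_mem_orthogonalBilin (hB : B.IsSymm) {y u : V}
    (hy : y ∈ U.orthogonalBilin B) (hu : u ∈ U) : B y u = 0 :=
  hB.eq_iff.1 (hy u hu)

lemma exists_mem_orthogonalBilin_apply_ne_zero [FiniteDimensional K V]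
    (hσ : Function.Involutive σ) (hB : B.IsSymm) (hnd : B.SeparatingLeft) {x : V} (hx : x ∉ U) :
    ∃ y ∈ U.orthogonalBilin B, B y x ≠ 0 := by
  obtain ⟨l, hlx, hl⟩ := Submodule.exists_le_ker_of_notMem hx
  obtain ⟨y, rfl⟩ := surjective_of_separatingLeft hσ hB hnd l
  exact ⟨y, fun u hu => hB.eq_iff.1 (hl hu), hlx⟩

lemma exists_mem_orthogonalBilin_apply_ne_zero_and [FiniteDimensional K V]
    (hσ : Function.Involutive σ) (hB : B.IsSymm) (hnd : B.SeparatingLeft) {x x' : V} (hx : x ∉ U)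
    (hx' : x' ∉ U) : ∃ y ∈ U.orthogonalBilin B, B y x ≠ 0 ∧ B y x' ≠ 0 := by
  obtain ⟨y, hy, hyx⟩ := exists_mem_orthogonalBilin_apply_ne_zero hσ hB hnd hx
  obtain ⟨y', hy', hyx'⟩ := exists_mem_orthogonalBilin_apply_ne_zero hσ hB hnd hx'
  by_cases h : B y x' = 0
  · by_cases h' : B y' x = 0
    · exact ⟨y + y', add_mem hy hy', by simpa [h'], by simpa [h]⟩
    · exact ⟨y', hy', h', hyx'⟩
  · exact ⟨y, hy, hyx, h⟩

lemma exists_apply_self_ne_zero (hB : B.IsSymm) (hne : ∃ a, σ a ≠ a) {x y : V} (hx : x ∈ U)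
    (hy : y ∈ U) (hxy : B x y ≠ 0) : ∃ v ∈ U, B v v ≠ 0 := by
  by_contra! hU
  obtain ⟨b, hb⟩ := exists_add_apply_ne_zero hne
  set z := (b / B x y) • y with hz
  have hzU : z ∈ U := U.smul_mem _ hy
  have hxz : B x z = b := by simp [hz, hxy]
  have hsum := hU (x + z) (add_mem hx hzU)
  simp only [map_add, LinearMap.add_apply, hU x hx, hU z hzU, ← hB.eq x z, hxz, zero_add,
    add_zero] at hsum
  exact hb (add_comm b (σ b) ▸ hsum)

lemma exists_notMem_forall_apply_eq [FiniteDimensional K V] (hσ : Function.Involutive σ)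
    (hB : B.IsSymm) (hnd : B.SeparatingLeft) {W : Submodule K V} (hW : ¬ W.orthogonalBilin B ≤ U)
    (l : Module.Dual K V) : ∃ x ∉ U, ∀ v ∈ W, B x v = l v := by
  obtain ⟨x, rfl⟩ := surjective_of_separatingLeft hσ hB hnd l
  by_cases hx : x ∈ U
  · obtain ⟨y, hy, hyU⟩ := SetLike.not_le_iff_exists.1 hW
    refine ⟨x + y, fun hxy => hyU ((Submodule.add_mem_iff_right U hx).1 hxy), fun v hv => ?_⟩
    rw [map_add, LinearMap.add_apply, apply_eq_zero_of_mem_orthogonalBilin hB hy hv, add_zero]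
  · exact ⟨x, hx, fun _ _ => rfl⟩

end Orthogonality

section IsometryGroup

variable {K V : Type*} [Field K] [AddCommGroup V] [Module K V] {σ : K →+* K}
  {B : V →ₛₗ[σ] V →ₗ[K] K} {U : Submodule K V}

/-- The group of isometries of a sesquilinear form. -/
def isometryGroup (B : V →ₛₗ[σ] V →ₗ[K] K) : Subgroup (V ≃ₗ[K] V) where
  carrier := {g | ∀ x y, B (g x) (g y) = B x y}
  one_mem' _ _ := rfl
  mul_mem' hg hh x y := (hg _ _).trans (hh x y)
  inv_mem' {g} hg x y := by
    rw [← hg, ← LinearEquiv.mul_apply, ← LinearEquiv.mul_apply, mul_inv_cancel]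
    rfl

/-- The isometries of `B` that fix the subspace `U` pointwise. -/
def isometryFixing (B : V →ₛₗ[σ] V →ₗ[K] K) (U : Submodule K V) : Subgroup (V ≃ₗ[K] V) :=
  isometryGroup B ⊓ fixingSubgroup (V ≃ₗ[K] V) (U : Set V)

/-- The dimension of the space of fixed vectors of `g`. -/
def fixedFinrank (g : V ≃ₗ[K] V) : ℕ :=
  Module.finrank K g.toLinearMap.fixedSubmodule

lemma mem_isometryFixing {g : V ≃ₗ[K] V} :
    g ∈ isometryFixing B U ↔ (∀ x y, B (g x) (g y) = B x y) ∧ ∀ u ∈ U, g u = u := by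
  rw [isometryFixing, Subgroup.mem_inf, mem_fixingSubgroup_iff]
  rfl

lemma mem_isometryFixing_sup_span {g : V ≃ₗ[K] V} {x : V} :
    g ∈ isometryFixing B (U ⊔ K ∙ x) ↔ g ∈ isometryFixing B U ∧ g x = x := by
  have hfix : (∀ u ∈ U ⊔ K ∙ x, g u = u) ↔ (∀ u ∈ U, g u = u) ∧ g x = x := by
    change U ⊔ K ∙ x ≤ g.toLinearMap.fixedSubmodule ↔ U ≤ g.toLinearMap.fixedSubmodule ∧ _
    rw [sup_le_iff, Submodule.span_singleton_le_iff_mem]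
    rfl
  rw [mem_isometryFixing, mem_isometryFixing, hfix, and_assoc]

lemma add_smul_apply_add_smul (hB : B.IsSymm) {z : V} {c : K}
    (hc : c + σ c * (1 + c * B z z) = 0) (x y : V) :
    B (x + (c * B z x) • z) (y + (c * B z y) • z) = B x y := by
  simp only [map_add, LinearMap.add_apply, LinearMap.map_smulₛₗ, LinearMap.smul_apply, map_mul,
    hB.eq z x, smul_eq_mul, RingHom.id_apply]
  linear_combination (B z y * B x z) * hc

lemma exists_mem_isometryFixing_apply_eq_add_smul (hB : B.IsSymm) {z : V}
    (hz : z ∈ U.orthogonalBilin B) {c : K} (hc : c + σ c * (1 + c * B z z) = 0) :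
    ∃ s ∈ isometryFixing B U, ∀ v, s v = v + (c * B z v) • z := by
  have hunit : IsUnit (1 + (c • B z) z) := by
    rw [isUnit_iff_ne_zero, LinearMap.smul_apply, smul_eq_mul]
    intro h0
    have hc0 : c = 0 := by rwa [h0, mul_zero, add_zero] at hc
    simp [hc0] at h0
  have happly : ∀ v, LinearEquiv.dilatransvection hunit v = v + (c * B z v) • z := fun v => by
    rw [LinearEquiv.dilatransvection.apply, LinearMap.smul_apply, smul_eq_mul]
  refine ⟨LinearEquiv.dilatransvection hunit, ⟨fun x y => ?_, fun u => ?_⟩, happly⟩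
  · rw [happly, happly, add_smul_apply_add_smul hB hc]
  · change LinearEquiv.dilatransvection hunit u.1 = u.1
    rw [happly, apply_eq_zero_of_mem_orthogonalBilin hB hz u.2, mul_zero, zero_smul, add_zero]

end IsometryGroup

section Witt

variable {K V : Type*} [Field K] [AddCommGroup V] [Module K V] {σ : K →+* K}
  {B : V →ₛₗ[σ] V →ₗ[K] K} {U : Submodule K V}

lemma exists_mem_isometryFixing_apply_eq_add (hB : B.IsSymm) {x z : V}
    (hz : z ∈ U.orthogonalBilin B) (hnorm : B (x + z) (x + z) = B x x) (hzx : B z x ≠ 0) :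
    ∃ s ∈ isometryFixing B U, s x = x + z := by
  simp only [map_add, LinearMap.add_apply, ← hB.eq z x] at hnorm
  obtain ⟨s, hs, hsv⟩ := exists_mem_isometryFixing_apply_eq_add_smul hB hz (c := (B z x)⁻¹) (by
    have hσzx := (map_ne_zero σ).2 hzx
    rw [map_inv₀]
    field_simp
    linear_combination hnorm)
  exact ⟨s, hs, by rw [hsv, inv_mul_cancel₀ hzx, one_smul]⟩

lemma exists_smul_apply_add_self_eq (hσ : Function.Involutive σ) (hne : ∃ a, σ a ≠ a)
    (hB : B.IsSymm) {x y : V} (hyx : B y x ≠ 0) :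
    ∃ a : K, a ≠ 0 ∧ B (x + a • y) (x + a • y) = B x x := by
  obtain ⟨b, hb0, hb⟩ := exists_ne_zero_add_apply_eq hσ hne (c := -B y y)
    (by rw [map_neg, hB.eq])
  have hσb := (map_ne_zero σ).2 hb0
  refine ⟨B y x / b, div_ne_zero hyx hb0, ?_⟩
  simp only [map_add, LinearMap.add_apply, LinearMap.map_smulₛₗ, LinearMap.smul_apply, map_div₀,
    hB.eq y x, smul_eq_mul, RingHom.id_apply]
  field_simp
  linear_combination (B x y * B y x) * hb

/-- **Witt's theorem** for extending the identity of `U` by one vector. If `z = x' - x` pairs to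
zero with `x`, no quasi-reflection maps `x` to `x'`; one passes through a third vector. -/
lemma exists_mem_isometryFixing_apply_eq [FiniteDimensional K V] (hσ : Function.Involutive σ)
    (hne : ∃ a, σ a ≠ a) (hB : B.IsSymm) (hnd : B.SeparatingLeft) {x x' : V} (hx : x ∉ U)
    (hx' : x' ∉ U) (hU : ∀ u ∈ U, B x u = B x' u) (hnorm : B x x = B x' x') :
    ∃ g ∈ isometryFixing B U, g x = x' := by
  obtain ⟨z, rfl⟩ : ∃ z, x' = x + z := ⟨x' - x, by abel⟩
  have hz : z ∈ U.orthogonalBilin B := fun u hu => hB.eq_iff.1 (by simpa using hU u hu)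
  by_cases hzx : B z x = 0
  swap
  · exact exists_mem_isometryFixing_apply_eq_add hB hz hnorm.symm hzx
  obtain ⟨y, hy, hyx, hyx'⟩ := exists_mem_orthogonalBilin_apply_ne_zero_and hσ hB hnd hx hx'
  obtain ⟨a, ha0, ha⟩ := exists_smul_apply_add_self_eq hσ hne hB hyx
  have hay : a • y ∈ U.orthogonalBilin B := Submodule.smul_mem _ a hy
  have hstep : B (z - a • y) (x + a • y) = a * B (x + z) y := by
    simp only [map_add, map_sub, LinearMap.add_apply, LinearMap.sub_apply, LinearMap.map_smulₛₗ,
      LinearMap.smul_apply, smul_eq_mul, RingHom.id_apply] at ha ⊢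
    linear_combination hzx - ha
  obtain ⟨s, hs, hsx⟩ := exists_mem_isometryFixing_apply_eq_add hB hay ha (by
    rw [LinearMap.map_smulₛₗ, LinearMap.smul_apply, smul_eq_mul]
    exact mul_ne_zero ((map_ne_zero σ).2 ha0) hyx)
  obtain ⟨t, ht, htx⟩ := exists_mem_isometryFixing_apply_eq_add hB (x := x + a • y)
    (sub_mem hz hay) (by rw [add_add_sub_cancel, ha, hnorm])
    (by rw [hstep]; exact mul_ne_zero ha0 fun h => hyx' (hB.eq_iff.1 h))
  exact ⟨t * s, mul_mem ht hs, by rw [LinearEquiv.mul_apply, hsx, htx, add_add_sub_cancel]⟩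

end Witt

section QuasiReflection

variable {K V : Type*} [Field K] [AddCommGroup V] [Module K V] {σ : K →+* K}
  {B : V →ₛₗ[σ] V →ₗ[K] K} {U : Submodule K V} {w : V}

/-- The dilations along a unit vector `w`: multiplication by the scalar `a` on the line of `w`,
the identity on its orthogonal complement. They are isometries when `a` has norm one. -/
def quasiReflection (hw : B w w = 1) : Kˣ →* (V ≃ₗ[K] V) where
  toFun a := LinearEquiv.dilatransvection (f := (a - 1 : K) • B w) (v := w) (by simp [hw])
  map_one' := by
    ext v
    simp [LinearEquiv.dilatransvection.apply]
  map_mul' a b := by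
    ext v
    simp only [LinearEquiv.dilatransvection.apply, LinearEquiv.mul_apply, LinearMap.smul_apply,
      smul_eq_mul, map_add, map_smul, hw, Units.val_mul]
    module

lemma quasiReflection_apply (hw : B w w = 1) (a : Kˣ) (v : V) :
    quasiReflection hw a v = v + ((a - 1 : K) * B w v) • w :=
  LinearEquiv.dilatransvection.apply

lemma quasiReflection_mem_isometryFixing (hB : B.IsSymm) (hw : B w w = 1)
    (hwU : w ∈ U.orthogonalBilin B) {a : Kˣ} (ha : a ∈ normOneSubgroup σ) :
    quasiReflection hw a ∈ isometryFixing B U := by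
  rw [mem_normOneSubgroup] at ha
  obtain ⟨s, hs, hsv⟩ := exists_mem_isometryFixing_apply_eq_add_smul hB hwU (c := a - 1) (by
    rw [hw, map_sub, map_one]
    linear_combination ha)
  convert hs
  ext v
  rw [quasiReflection_apply, hsv]

lemma finrank_inf_ker_add_one [FiniteDimensional K V] {W : Submodule K V} {l : Module.Dual K V}
    (hW : ¬ W ≤ LinearMap.ker l) :
    Module.finrank K ↥(W ⊓ LinearMap.ker l) + 1 = Module.finrank K W := by
  have hne : l.domRestrict W ≠ 0 := fun h0 =>
    hW fun x hx => LinearMap.congr_fun h0 ⟨x, hx⟩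
  rw [← Module.Dual.finrank_ker_add_one_of_ne_zero hne, LinearMap.ker_domRestrict,
    ← Submodule.finrank_map_subtype_eq, Submodule.map_comap_subtype]

lemma fixedSubmodule_quasiReflection_mul (hB : B.IsSymm) (hw : B w w = 1) {a : Kˣ} (ha : a ≠ 1)
    {g : V ≃ₗ[K] V} (hg : g ∈ isometryGroup B)
    (hgw : ¬ g.toLinearMap.fixedSubmodule ≤ LinearMap.ker (B w)) :
    (quasiReflection hw a * g).toLinearMap.fixedSubmodule =
      g.toLinearMap.fixedSubmodule ⊓ LinearMap.ker (B w) := by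
  obtain ⟨y, hy, hyw⟩ := SetLike.not_le_iff_exists.1 hgw
  simp only [LinearMap.mem_fixedSubmodule_iff, LinearEquiv.coe_coe, LinearMap.mem_ker] at hy hyw
  have ha1 : (a : K) - 1 ≠ 0 := sub_ne_zero.2 (by simpa using ha)
  ext x
  simp only [LinearMap.mem_fixedSubmodule_iff, LinearEquiv.coe_coe, LinearEquiv.mul_apply,
    quasiReflection_apply, Submodule.mem_inf, LinearMap.mem_ker]
  constructor
  · intro hx
    have hyx : B y (g x) = B y x := by rw [← hg y x, hy]
    have hpair := congrArg (B y) hx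
    rw [map_add, map_smul, hyx, smul_eq_mul, add_eq_left, mul_eq_zero,
      or_iff_left (mt hB.eq_iff.1 hyw), mul_eq_zero, or_iff_right ha1] at hpair
    rw [hpair, mul_zero, zero_smul, add_zero] at hx
    exact ⟨hx, hx ▸ hpair⟩
  · rintro ⟨hx, hwx⟩
    rw [hx, hwx, mul_zero, zero_smul, add_zero]

lemma exists_apply_eq_add_of_fixedSubmodule_le [FiniteDimensional K V]
    (hσ : Function.Involutive σ) (hB : B.IsSymm) (hnd : B.SeparatingLeft) {g : V ≃ₗ[K] V}
    (hg : g ∈ isometryGroup B) (hgw : g.toLinearMap.fixedSubmodule ≤ LinearMap.ker (B w)) :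
    ∃ u, g u = u + w := by
  by_contra! hno
  have hw : w ∉ LinearMap.range (g.toLinearMap - LinearMap.id) := by
    rintro ⟨u, hu⟩
    exact hno u (by rw [← hu]; simp)
  obtain ⟨v, hv, hvw⟩ := exists_mem_orthogonalBilin_apply_ne_zero hσ hB hnd hw
  have hgv : g v = v := by
    rw [← sub_eq_zero]
    refine hnd _ fun y => ?_
    obtain ⟨x, rfl⟩ := g.surjective y
    have hvx : B v (g x - x) = 0 := apply_eq_zero_of_mem_orthogonalBilin hB hv ⟨x, rfl⟩
    rw [map_sub] at hvx
    rw [map_sub, LinearMap.sub_apply, hg]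
    linear_combination -hvx
  exact hvw (hB.eq_iff.1 (hgw hgv))

lemma exists_quasiReflection_apply_eq_self (hB : B.IsSymm) (hw : B w w = 1) {g : V ≃ₗ[K] V}
    (hg : g ∈ isometryGroup B) {u : V} (hu : g u = u + w) :
    B w u ≠ 0 ∧ ∃ a ∈ normOneSubgroup σ, quasiReflection hw a (g u) = u := by
  set b := B w u with hb
  have htrace : b + σ b + 1 = 0 := by
    have hnorm := hg u u
    simp only [hu, map_add, LinearMap.add_apply, hw, ← hB.eq w u, ← hb] at hnorm
    linear_combination hnorm
  have hb0 : b ≠ 0 := by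
    intro h0
    simp [h0] at htrace
  have hσb : σ b = -(b + 1) := by linear_combination htrace
  have hb1 : b + 1 ≠ 0 := by
    rw [← neg_ne_zero, ← hσb]
    exact (map_ne_zero σ).2 hb0
  refine ⟨hb0, Units.mk0 (b / (b + 1)) (div_ne_zero hb0 hb1), ?_, ?_⟩
  · have hσb1 : σ (b + 1) = -b := by
      rw [map_add, hσb, map_one]
      ring
    rw [mem_normOneSubgroup, Units.val_mk0, map_div₀, hσb, hσb1]
    field_simp
  · have hcoeff : (b / (b + 1) - 1) * (b + 1) = -1 := by
      field_simp
      ring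
    rw [quasiReflection_apply, hu, map_add, hw, ← hb, Units.val_mk0, hcoeff]
    simp

lemma exists_quasiReflection_mul_not_le [FiniteDimensional K V] (hσ : Function.Involutive σ)
    (hB : B.IsSymm) (hnd : B.SeparatingLeft) (hw : B w w = 1) {g : V ≃ₗ[K] V}
    (hg : g ∈ isometryGroup B) : ∃ a ∈ normOneSubgroup σ,
      ¬ (quasiReflection hw a * g).toLinearMap.fixedSubmodule ≤ LinearMap.ker (B w) := by
  by_cases hgw : g.toLinearMap.fixedSubmodule ≤ LinearMap.ker (B w)
  · obtain ⟨u, hu⟩ := exists_apply_eq_add_of_fixedSubmodule_le hσ hB hnd hg hgw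
    obtain ⟨hwu, a, ha, hau⟩ := exists_quasiReflection_apply_eq_self hB hw hg hu
    exact ⟨a, ha, fun hle => hwu (hle hau)⟩
  · exact ⟨1, one_mem _, by rwa [map_one, one_mul]⟩

lemma eq_of_quasiReflection_mul_eq (hB : B.IsSymm) (hw : B w w = 1) {g h : V ≃ₗ[K] V} {a b : Kˣ}
    (hg : g ∈ isometryGroup B) (hgw : ¬ g.toLinearMap.fixedSubmodule ≤ LinearMap.ker (B w))
    (hhw : ¬ h.toLinearMap.fixedSubmodule ≤ LinearMap.ker (B w))
    (heq : quasiReflection hw a * g = quasiReflection hw b * h) : a = b := by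
  by_contra hab
  have hh : h = quasiReflection hw (b⁻¹ * a) * g := by
    rw [map_mul, map_inv, mul_assoc, heq, inv_mul_cancel_left]
  have hba : b⁻¹ * a ≠ 1 := by rwa [Ne, inv_mul_eq_one, eq_comm]
  rw [hh, fixedSubmodule_quasiReflection_mul hB hw hba hg hgw] at hhw
  exact hhw inf_le_right

end QuasiReflection

section Pairing

variable {K V : Type*} [Field K] [AddCommGroup V] [Module K V] [Finite V] {σ : K →+* K}
  {B : V →ₛₗ[σ] V →ₗ[K] K} {U : Submodule K V} {w : V} {q : ℕ}

instance finite_linearEquiv : Finite (V ≃ₗ[K] V) :=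
  DFunLike.finite _

/-- The finite set underlying `isometryFixing B U`, to sum over. -/
def isometryFinset (B : V →ₛₗ[σ] V →ₗ[K] K) (U : Submodule K V) : Finset (V ≃ₗ[K] V) :=
  (Set.toFinite (isometryFixing B U : Set (V ≃ₗ[K] V))).toFinset

@[simp]
lemma mem_isometryFinset {g : V ≃ₗ[K] V} : g ∈ isometryFinset B U ↔ g ∈ isometryFixing B U := by
  simp [isometryFinset]

open Classical in
/-- The coset of an isometry under the quasi-reflections along `w` contains exactly one isometry
that has a fixed vector not orthogonal to `w`. -/
lemma sum_isometryFinset_eq_sum_sum [Fintype (normOneSubgroup σ)] {M : Type*} [AddCommMonoid M]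
    (hσ : Function.Involutive σ) (hB : B.IsSymm) (hnd : B.SeparatingLeft) (hw : B w w = 1)
    (hwU : w ∈ U.orthogonalBilin B) (F : (V ≃ₗ[K] V) → M) :
    ∑ g ∈ isometryFinset B U, F g =
      ∑ g ∈ isometryFinset B U with ¬ g.toLinearMap.fixedSubmodule ≤ LinearMap.ker (B w),
        ∑ a : normOneSubgroup σ, F (quasiReflection hw a * g) := by
  have hqr (a : normOneSubgroup σ) : quasiReflection hw a ∈ isometryFixing B U :=
    quasiReflection_mem_isometryFixing hB hw hwU a.2
  rw [← Finset.sum_product']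
  symm
  refine Finset.sum_nbij (fun p => quasiReflection hw p.2 * p.1) ?_ ?_ ?_ fun _ _ => rfl
  · rintro ⟨g, a⟩ hp
    simp only [Finset.mem_product, Finset.mem_filter, mem_isometryFinset] at hp ⊢
    exact mul_mem (hqr a) hp.1.1
  · rintro ⟨g, a⟩ hp ⟨h, b⟩ hp' heq
    simp only [Finset.coe_product, Set.mem_prod, Finset.mem_coe, Finset.mem_filter,
      mem_isometryFinset] at hp hp'
    obtain rfl : a = b := Subtype.ext <|
      eq_of_quasiReflection_mul_eq hB hw hp.1.1.1 hp.1.2 hp'.1.2 heq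
    exact Prod.ext (mul_left_cancel heq) rfl
  · intro g hg
    rw [Finset.mem_coe, mem_isometryFinset] at hg
    obtain ⟨a, ha, hag⟩ := exists_quasiReflection_mul_not_le hσ hB hnd hw hg.1
    refine ⟨(quasiReflection hw a * g, ⟨a, ha⟩⁻¹), ?_, ?_⟩
    · simp only [Finset.coe_product, Set.mem_prod, Finset.mem_coe, Finset.mem_filter,
        mem_isometryFinset, Finset.mem_univ, and_true]
      exact ⟨mul_mem (hqr ⟨a, ha⟩) hg, hag⟩
    · change quasiReflection hw a⁻¹ * (quasiReflection hw a * g) = g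
      rw [map_inv, inv_mul_cancel_left]

lemma sum_fixedFinrank_quasiReflection_mul [Fintype (normOneSubgroup σ)]
    (hσ : IsQuadraticFrobenius σ q) (hB : B.IsSymm) (hw : B w w = 1) {g : V ≃ₗ[K] V}
    (hg : g ∈ isometryGroup B) (hgw : ¬ g.toLinearMap.fixedSubmodule ≤ LinearMap.ker (B w))
    (F : ℕ → ℝ) :
    ∑ a : normOneSubgroup σ, F (fixedFinrank (quasiReflection hw a * g)) =
      F (fixedFinrank g) + q * F (fixedFinrank g - 1) := by
  classical
  have hdrop : ∀ a ∈ Finset.univ.erase (1 : normOneSubgroup σ),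
      F (fixedFinrank (quasiReflection hw a * g)) = F (fixedFinrank g - 1) := fun a ha => by
    have ha1 : (a : Kˣ) ≠ 1 := fun h => Finset.ne_of_mem_erase ha (Subtype.ext h)
    rw [fixedFinrank, fixedFinrank, fixedSubmodule_quasiReflection_mul hB hw ha1 hg hgw,
      ← finrank_inf_ker_add_one hgw, Nat.add_sub_cancel]
  have hcard : Fintype.card (normOneSubgroup σ) = q + 1 := by
    rw [← Nat.card_eq_fintype_card, hσ.natCard_normOneSubgroup]
  rw [← Finset.add_sum_erase _ _ (Finset.mem_univ 1), Finset.sum_congr rfl hdrop, Finset.sum_const,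
    Finset.card_erase_of_mem (Finset.mem_univ _), Finset.card_univ, hcard, Nat.add_sub_cancel,
    nsmul_eq_mul, OneMemClass.coe_one, map_one, one_mul]

open Classical in
lemma sum_fixedFinrank_eq (hσ : IsQuadraticFrobenius σ q) (hB : B.IsSymm)
    (hnd : B.SeparatingLeft) (hw : B w w = 1) (hwU : w ∈ U.orthogonalBilin B) (F : ℕ → ℝ) :
    ∑ g ∈ isometryFinset B U, F (fixedFinrank g) =
      ∑ g ∈ isometryFinset B U with ¬ g.toLinearMap.fixedSubmodule ≤ LinearMap.ker (B w),
        (F (fixedFinrank g) + q * F (fixedFinrank g - 1)) := by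
  have := hσ.finite
  have := Fintype.ofFinite (normOneSubgroup σ)
  rw [sum_isometryFinset_eq_sum_sum hσ.involutive hB hnd hw hwU fun g => F (fixedFinrank g)]
  refine Finset.sum_congr rfl fun g hg => ?_
  rw [Finset.mem_filter, mem_isometryFinset] at hg
  exact sum_fixedFinrank_quasiReflection_mul hσ hB hw hg.1.1 hg.2 F

end Pairing

section Orbits

variable {K V : Type*} [Field K] [AddCommGroup V] [Module K V] {σ : K →+* K}
  {B : V →ₛₗ[σ] V →ₗ[K] K} {U : Submodule K V} {q : ℕ}

lemma orthogonalBilin_not_le [FiniteDimensional K V] (B : V →ₛₗ[σ] V →ₗ[K] K)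
    (hU : 2 * Module.finrank K U < Module.finrank K V) : ¬ U.orthogonalBilin B ≤ U := fun hle => by
  have hsum := finrank_le_finrank_add_finrank_orthogonalBilin B U
  have hmono := Submodule.finrank_mono hle
  omega

lemma exists_mem_orthogonalBilin_apply_self_eq_one [FiniteDimensional K V]
    (hσ : IsQuadraticFrobenius σ q) (hB : B.IsSymm) (hnd : B.SeparatingLeft)
    (hU : ¬ U.orthogonalBilin B ≤ U) : ∃ w ∈ U.orthogonalBilin B, B w w = 1 := by
  obtain ⟨y, hy, hyU⟩ := SetLike.not_le_iff_exists.1 hU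
  obtain ⟨z, hz, hzy⟩ := exists_mem_orthogonalBilin_apply_ne_zero hσ.involutive hB hnd hyU
  obtain ⟨v, hv, hvv⟩ := exists_apply_self_ne_zero hB hσ.exists_apply_ne hz hy hzy
  obtain ⟨a, ha⟩ := hσ.exists_mul_self_eq (c := (B v v)⁻¹) (by rw [map_inv₀, hB.eq])
  refine ⟨a • v, Submodule.smul_mem _ a hv, ?_⟩
  calc B (a • v) (a • v) = σ a * a * B v v := by simp [mul_assoc, mul_left_comm]
    _ = 1 := by rw [ha, inv_mul_cancel₀ hvv]

lemma exists_notMem_forall_apply_eq_and_apply_eq_zero [FiniteDimensional K V]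
    (hσ : Function.Involutive σ) (hB : B.IsSymm) (hnd : B.SeparatingLeft)
    (hU : 2 * Module.finrank K U + 2 ≤ Module.finrank K V) {w : V} (hw : w ∈ U.orthogonalBilin B)
    (hww : B w w = 1) (l : Module.Dual K U) : ∃ x ∉ U, (∀ u : U, B x u = l u) ∧ B x w = 0 := by
  obtain ⟨l', hl'⟩ := LinearMap.exists_extend l
  have hW : ¬ (U ⊔ K ∙ w).orthogonalBilin B ≤ U := fun hle => by
    have hsum := finrank_le_finrank_add_finrank_orthogonalBilin B (U ⊔ K ∙ w)
    have hsup := Submodule.finrank_add_le_finrank_add_finrank U (K ∙ w)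
    have hline : Module.finrank K (K ∙ w) ≤ 1 := by simpa using finrank_span_le_card (R := K) {w}
    have hmono := Submodule.finrank_mono hle
    omega
  obtain ⟨x, hxU, hx⟩ := exists_notMem_forall_apply_eq hσ hB hnd hW (l' - l' w • B w)
  refine ⟨x, hxU, fun u => ?_, ?_⟩
  · rw [hx u (Submodule.mem_sup_left u.2), LinearMap.sub_apply, LinearMap.smul_apply,
      apply_eq_zero_of_mem_orthogonalBilin hB hw u.2, smul_zero, sub_zero, ← hl']
    rfl
  · rw [hx w (Submodule.mem_sup_right (Submodule.mem_span_singleton_self w)), LinearMap.sub_apply,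
      LinearMap.smul_apply, hww, smul_eq_mul, mul_one, sub_self]

lemma exists_notMem_apply_eq_and_apply_self_eq [FiniteDimensional K V]
    (hσ : IsQuadraticFrobenius σ q) (hB : B.IsSymm) (hnd : B.SeparatingLeft)
    (hU : 2 * Module.finrank K U + 2 ≤ Module.finrank K V) (l : Module.Dual K U) {c : K}
    (hc : σ c = c) : ∃ x ∉ U, (∀ u : U, B x u = l u) ∧ B x x = c := by
  obtain ⟨w, hw, hww⟩ := exists_mem_orthogonalBilin_apply_self_eq_one hσ hB hnd
    (orthogonalBilin_not_le B (U := U) (by omega))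
  obtain ⟨x, hxU, hxl, hxw⟩ :=
    exists_notMem_forall_apply_eq_and_apply_eq_zero hσ.involutive hB hnd hU hw hww l
  have hwx : B w x = 0 := hB.eq_iff.1 hxw
  obtain ⟨a, ha⟩ := hσ.exists_mul_self_eq (c := c - B x x) (by rw [map_sub, hc, hB.eq])
  refine ⟨x + a • w, fun hmem => hxU ?_, fun u => ?_, ?_⟩
  · have ha0 : a = 0 := by
      simpa [hwx, hww] using apply_eq_zero_of_mem_orthogonalBilin hB hw hmem
    simpa [ha0] using hmem
  · simp [hxl, apply_eq_zero_of_mem_orthogonalBilin hB hw u.2]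
  · simp only [map_add, LinearMap.add_apply, LinearMap.map_smulₛₗ, LinearMap.smul_apply,
      smul_eq_mul, RingHom.id_apply, hxw, hwx, hww]
    linear_combination ha

open Classical in
/-- The invariant classifying the orbits of `isometryFixing B U` on `V`: a vector of `U` is fixed,
any other vector `x` is determined up to isometry by its pairings with `U` and with itself. -/
def orbitInvariant (hB : B.IsSymm) (U : Submodule K V) (x : V) :
    U ⊕ (Module.Dual K U × {c : K // σ c = c}) :=
  if hx : x ∈ U then Sum.inl ⟨x, hx⟩
  else Sum.inr ((B x).domRestrict U, ⟨B x x, hB.eq x x⟩)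

lemma orbitInvariant_of_mem (hB : B.IsSymm) {x : V} (hx : x ∈ U) :
    orbitInvariant hB U x = Sum.inl ⟨x, hx⟩ := dif_pos hx

lemma orbitInvariant_of_notMem (hB : B.IsSymm) {x : V} (hx : x ∉ U) :
    orbitInvariant hB U x = Sum.inr ((B x).domRestrict U, ⟨B x x, hB.eq x x⟩) :=
  dif_neg hx

lemma orbitInvariant_apply (hB : B.IsSymm) {g : V ≃ₗ[K] V} (hg : g ∈ isometryFixing B U) (x : V) :
    orbitInvariant hB U (g x) = orbitInvariant hB U x := by
  obtain ⟨hiso, hfix⟩ := mem_isometryFixing.1 hg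
  by_cases hx : x ∈ U
  · rw [hfix x hx]
  · have hgx : g x ∉ U := fun hmem => hx (by rwa [← g.injective (hfix _ hmem)])
    have hpair : (B (g x)).domRestrict U = (B x).domRestrict U :=
      LinearMap.ext fun u => by simpa [hfix u u.2] using hiso x u
    simp only [orbitInvariant_of_notMem hB hx, orbitInvariant_of_notMem hB hgx, hpair, hiso]

lemma exists_apply_eq_of_orbitInvariant_eq [FiniteDimensional K V]
    (hσ : Function.Involutive σ) (hne : ∃ a, σ a ≠ a) (hB : B.IsSymm) (hnd : B.SeparatingLeft)
    {x y : V} (hxy : orbitInvariant hB U x = orbitInvariant hB U y) :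
    ∃ g ∈ isometryFixing B U, g x = y := by
  by_cases hx : x ∈ U <;> by_cases hy : y ∈ U
  · rw [orbitInvariant_of_mem hB hx, orbitInvariant_of_mem hB hy] at hxy
    exact ⟨1, one_mem _, congrArg Subtype.val (Sum.inl_injective hxy)⟩
  · rw [orbitInvariant_of_mem hB hx, orbitInvariant_of_notMem hB hy] at hxy
    exact absurd hxy Sum.inl_ne_inr
  · rw [orbitInvariant_of_notMem hB hx, orbitInvariant_of_mem hB hy] at hxy
    exact absurd hxy Sum.inr_ne_inl
  · rw [orbitInvariant_of_notMem hB hx, orbitInvariant_of_notMem hB hy] at hxy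
    obtain ⟨hpair, hnorm⟩ := Prod.ext_iff.1 (Sum.inr_injective hxy)
    exact exists_mem_isometryFixing_apply_eq hσ hne hB hnd hx hy
      (fun u hu => LinearMap.congr_fun hpair ⟨u, hu⟩) (congrArg Subtype.val hnorm)

lemma orbitInvariant_surjective [FiniteDimensional K V] (hσ : IsQuadraticFrobenius σ q)
    (hB : B.IsSymm) (hnd : B.SeparatingLeft)
    (hU : 2 * Module.finrank K U + 2 ≤ Module.finrank K V) :
    Function.Surjective (orbitInvariant hB U) := by
  rintro (u | ⟨l, c, hc⟩)
  · exact ⟨u, orbitInvariant_of_mem hB u.2⟩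
  · obtain ⟨x, hx, hxl, hxx⟩ := exists_notMem_apply_eq_and_apply_self_eq hσ hB hnd hU l hc
    have hpair : (B x).domRestrict U = l := LinearMap.ext hxl
    refine ⟨x, ?_⟩
    simp only [orbitInvariant_of_notMem hB hx, hpair, hxx]

lemma IsQuadraticFrobenius.natCard_eq_pow_finrank (hσ : IsQuadraticFrobenius σ q) (W : Type*)
    [AddCommGroup W] [Module K W] [Module.Finite K W] :
    Nat.card W = q ^ (2 * Module.finrank K W) := by
  rw [Module.natCard_eq_pow_finrank (K := K), hσ.natCard_eq, pow_mul]

lemma natCard_orbits_isometryFixing [Finite V] (hσ : IsQuadraticFrobenius σ q) (hB : B.IsSymm)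
    (hnd : B.SeparatingLeft) (hU : 2 * Module.finrank K U + 2 ≤ Module.finrank K V) :
    Nat.card (MulAction.orbitRel.Quotient (isometryFixing B U) V) =
      q ^ (2 * Module.finrank K U) * (1 + q) := by
  let f : MulAction.orbitRel.Quotient (isometryFixing B U) V →
      U ⊕ (Module.Dual K U × {c : K // σ c = c}) :=
    Quotient.lift (orbitInvariant hB U) fun x y hxy => by
      obtain ⟨g, rfl⟩ := hxy
      exact orbitInvariant_apply hB g.2 y
  have hinj : Function.Injective f := by
    rintro ⟨x⟩ ⟨y⟩ hxy
    obtain ⟨g, hg, rfl⟩ :=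
      exists_apply_eq_of_orbitInvariant_eq hσ.involutive hσ.exists_apply_ne hB hnd hxy
    exact (Quotient.sound (s := MulAction.orbitRel (isometryFixing B U) V) ⟨⟨g, hg⟩, rfl⟩).symm
  have hsurj : Function.Surjective f := fun b => by
    obtain ⟨x, rfl⟩ := orbitInvariant_surjective hσ hB hnd hU b
    exact ⟨Quotient.mk _ x, rfl⟩
  have := hσ.finite
  have : Finite (Module.Dual K U) := Module.finite_of_finite K
  rw [Nat.card_eq_of_bijective f ⟨hinj, hsurj⟩, Nat.card_sum, Nat.card_prod,
    hσ.natCard_eq_pow_finrank U, hσ.natCard_eq_pow_finrank (Module.Dual K U),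
    Subspace.dual_finrank_eq, hσ.natCard_fixed]
  ring

lemma sum_pow_two_mul_fixedFinrank [Finite V] (hσ : IsQuadraticFrobenius σ q) (hB : B.IsSymm)
    (hnd : B.SeparatingLeft) (hU : 2 * Module.finrank K U + 2 ≤ Module.finrank K V) :
    ∑ g ∈ isometryFinset B U, q ^ (2 * fixedFinrank g) =
      (isometryFinset B U).card * (q ^ (2 * Module.finrank K U) * (1 + q)) := by
  classical
  have := Fintype.ofFinite V
  have := Fintype.ofFinite (isometryFixing B U)
  have hcard : (isometryFinset B U).card = Fintype.card (isometryFixing B U) :=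
    (Fintype.card_of_subtype _ fun _ => mem_isometryFinset).symm
  have hfix (g : isometryFixing B U) :
      q ^ (2 * fixedFinrank g.1) = Fintype.card (MulAction.fixedBy V g) := by
    rw [fixedFinrank, ← hσ.natCard_eq_pow_finrank, ← Nat.card_eq_fintype_card]
    rfl
  rw [Finset.sum_subtype (p := (· ∈ isometryFixing B U)) _ fun g => mem_isometryFinset,
    Finset.sum_congr rfl fun g _ => hfix g,
    MulAction.sum_card_fixedBy_eq_card_orbits_mul_card_group, ← Nat.card_eq_fintype_card,
    natCard_orbits_isometryFixing hσ hB hnd hU, hcard, mul_comm]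

end Orbits

section MomentFunctional

open Polynomial

variable {R : Type*} [CommRing R]

/-- For `Q = -q`, the average of `Q ^ (j * dim ker (g - 1))` over the isometries `g` of a unitary
space of dimension at least `j`. -/
def momentRatio (Q : R) : ℕ → R
  | 0 => 1
  | 1 => 0
  | j + 2 => (1 - Q ^ (j + 1)) * momentRatio Q j

/-- The linear functional on polynomials with moments `momentRatio Q`. -/
def momentFunctional (Q : R) : R[X] →ₗ[R] R :=
  (Polynomial.basisMonomials R).constr R (momentRatio Q)

lemma momentFunctional_monomial (Q : R) (j : ℕ) (a : R) :
    momentFunctional Q (monomial j a) = a * momentRatio Q j := by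
  have hbasis : monomial j a = a • Polynomial.basisMonomials R j := by
    rw [coe_basisMonomials, smul_monomial, smul_eq_mul, mul_one]
  rw [hbasis, map_smul, momentFunctional, Module.Basis.constr_basis, smul_eq_mul]

lemma momentFunctional_X_sq_mul (Q : R) (P : R[X]) :
    momentFunctional Q (X ^ 2 * P) =
      momentFunctional Q P - Q * momentFunctional Q (P.comp (C Q * X)) := by
  induction P using Polynomial.induction_on' with
  | add P₁ P₂ h₁ h₂ =>
    simp only [mul_add, add_comp, map_add, h₁, h₂]
    ring
  | monomial j a =>
    have hcomp : (monomial j a).comp (C Q * X) = monomial j (a * Q ^ j) := by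
      rw [monomial_comp, mul_pow, ← C_pow, ← mul_assoc, ← C_mul, C_mul_X_pow_eq_monomial]
    rw [X_pow_mul_monomial, hcomp]
    simp only [momentFunctional_monomial, momentRatio]
    ring

/-- The `Q`-falling factorial, the monic polynomial with roots `Q ^ i` for `i < j`. -/
def qFalling (Q : R) (j : ℕ) : R[X] := ∏ i ∈ Finset.range j, (X - C (Q ^ i))

lemma qFalling_zero (Q : R) : qFalling Q 0 = 1 := rfl

lemma qFalling_succ (Q : R) (j : ℕ) : qFalling Q (j + 1) = qFalling Q j * (X - C (Q ^ j)) :=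
  Finset.prod_range_succ _ _

lemma natDegree_qFalling_le (Q : R) (j : ℕ) : (qFalling Q j).natDegree ≤ j := by
  nontriviality R
  rw [qFalling, natDegree_finsetProd_X_sub_C_eq_card, Finset.card_range]

lemma X_sq_mul_qFalling (Q : R) (j : ℕ) :
    X ^ 2 * qFalling Q j = qFalling Q (j + 2) + (Q ^ (j + 1) + Q ^ j) • qFalling Q (j + 1) +
      Q ^ (2 * j) • qFalling Q j := by
  simp only [qFalling_succ, smul_eq_C_mul, C_add, C_pow]
  ring

lemma qFalling_succ_comp (Q : R) (j : ℕ) : (qFalling Q (j + 1)).comp (C Q * X) =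
    Q ^ (j + 1) • qFalling Q (j + 1) + (Q ^ j * (Q ^ (j + 1) - 1)) • qFalling Q j := by
  have hshift : (qFalling Q (j + 1)).comp (C Q * X) = C Q ^ j * qFalling Q j * (C Q * X - 1) := by
    have hfactor : ∀ i ∈ Finset.range j,
        C Q * X - C (Q ^ (i + 1)) = C Q * (X - C (Q ^ i)) := fun i _ => by
      rw [pow_succ', C_mul, mul_sub]
    simp only [qFalling, prod_comp, sub_comp, X_comp, C_comp]
    rw [Finset.prod_range_succ', Finset.prod_congr rfl hfactor, Finset.prod_mul_distrib,
      Finset.prod_const, Finset.card_range, pow_zero, C_1]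
  rw [hshift]
  simp only [qFalling_succ, smul_eq_C_mul, C_mul, C_sub, C_pow, C_1]
  ring

theorem momentFunctional_qFalling (Q : R) : ∀ j, momentFunctional Q (qFalling Q j) = (-1) ^ j
  | 0 => by
    rw [qFalling_zero, ← monomial_zero_one, momentFunctional_monomial, momentRatio, mul_one,
      pow_zero]
  | 1 => by
    rw [qFalling_succ, qFalling_zero, one_mul, pow_zero, map_sub, ← monomial_zero_left, X,
      momentFunctional_monomial, momentFunctional_monomial, momentRatio, momentRatio]
    ring
  | 2 => by
    have hrec := momentFunctional_X_sq_mul Q (qFalling Q 0)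
    rw [X_sq_mul_qFalling, qFalling_zero, one_comp, ← qFalling_zero Q] at hrec
    simp only [map_add, map_smul, smul_eq_mul, momentFunctional_qFalling Q 0,
      momentFunctional_qFalling Q 1] at hrec
    linear_combination hrec
  | j + 3 => by
    have hrec := momentFunctional_X_sq_mul Q (qFalling Q (j + 1))
    rw [X_sq_mul_qFalling, qFalling_succ_comp] at hrec
    simp only [map_add, map_smul, smul_eq_mul, momentFunctional_qFalling Q j,
      momentFunctional_qFalling Q (j + 1), momentFunctional_qFalling Q (j + 2)] at hrec
    linear_combination hrec

end MomentFunctional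

section Moments

variable {K V : Type*} [Field K] [AddCommGroup V] [Module K V] {σ : K →+* K}
  {B : V →ₛₗ[σ] V →ₗ[K] K} {U : Submodule K V} {q : ℕ}

lemma natCard_mem_and_apply_eq_one {W : Submodule K V} {l : Module.Dual K V}
    (hW : ¬ W ≤ LinearMap.ker l) :
    Nat.card {x // x ∈ W ∧ l x = 1} = Nat.card ↥(W ⊓ LinearMap.ker l) := by
  obtain ⟨y, hy, hly⟩ := SetLike.not_le_iff_exists.1 hW
  rw [LinearMap.mem_ker] at hly
  have hz : (l y)⁻¹ • y ∈ W := W.smul_mem _ hy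
  have hlz : l ((l y)⁻¹ • y) = 1 := by rw [map_smul, smul_eq_mul, inv_mul_cancel₀ hly]
  refine Nat.card_congr ((Equiv.subRight ((l y)⁻¹ • y)).subtypeEquiv fun x => ?_)
  rw [Equiv.subRight_apply, Submodule.mem_inf, LinearMap.mem_ker, map_sub, hlz, sub_eq_zero,
    Submodule.sub_mem_iff_left W hz]

/-- The `j`-th power sum of `(-q) ^ dim ker (g - 1)` over the isometries `g` fixing `U` pointwise.
It is the base `-q`, rather than `q`, that turns the pairing by quasi-reflections into a recursion
between these sums. -/
def fixMoment [Finite V] (q : ℕ) (B : V →ₛₗ[σ] V →ₗ[K] K) (U : Submodule K V) (j : ℕ) : ℝ :=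
  ∑ g ∈ isometryFinset B U, (-(q : ℝ)) ^ (j * fixedFinrank g)

lemma fixMoment_zero [Finite V] (q : ℕ) (B : V →ₛₗ[σ] V →ₗ[K] K) (U : Submodule K V) :
    fixMoment q B U 0 = (isometryFinset B U).card := by
  simp [fixMoment]

lemma fixMoment_one [Finite V] (hσ : IsQuadraticFrobenius σ q) (hB : B.IsSymm)
    (hnd : B.SeparatingLeft) {w : V} (hw : w ∈ U.orthogonalBilin B) (hww : B w w = 1) :
    fixMoment q B U 1 = 0 := by
  classical
  rw [fixMoment, sum_fixedFinrank_eq hσ hB hnd hww hw fun f => (-(q : ℝ)) ^ (1 * f)]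
  refine Finset.sum_eq_zero fun g hg => ?_
  rw [fixedFinrank, ← finrank_inf_ker_add_one (Finset.mem_filter.1 hg).2, Nat.add_sub_cancel]
  ring

lemma fixMoment_two [Finite V] (hσ : IsQuadraticFrobenius σ q) (hB : B.IsSymm)
    (hnd : B.SeparatingLeft) (hU : 2 * Module.finrank K U + 2 ≤ Module.finrank K V) :
    fixMoment q B U 2 =
      (isometryFinset B U).card * ((-(q : ℝ)) ^ (2 * Module.finrank K U) * (1 + q)) := by
  simp only [fixMoment, (even_two_mul _).neg_pow]
  exact_mod_cast sum_pow_two_mul_fixedFinrank hσ hB hnd hU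

open Classical in
lemma isometryFinset_sup_span [Finite V] (B : V →ₛₗ[σ] V →ₗ[K] K) (U : Submodule K V) (x : V) :
    isometryFinset B (U ⊔ K ∙ x) = (isometryFinset B U).filter fun g => g x = x := by
  ext g
  simp only [mem_isometryFinset, mem_isometryFixing_sup_span, Finset.mem_filter]

open Classical in
lemma card_filter_apply_eq_one_and_apply_eq_self [Fintype V] (hσ : IsQuadraticFrobenius σ q)
    (g : V ≃ₗ[K] V) (w : V) :
    q ^ 2 * (Finset.univ.filter fun x => B w x = 1 ∧ g x = x).card =
      if g.toLinearMap.fixedSubmodule ≤ LinearMap.ker (B w) then 0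
      else q ^ (2 * fixedFinrank g) := by
  split_ifs with hle
  · have hempty : (Finset.univ.filter fun x => B w x = 1 ∧ g x = x) = ∅ :=
      Finset.filter_eq_empty_iff.2 fun x _ hx => zero_ne_one ((hle hx.2).symm.trans hx.1)
    rw [hempty, Finset.card_empty, mul_zero]
  · have hcard : (Finset.univ.filter fun x => B w x = 1 ∧ g x = x).card =
        Nat.card {x // x ∈ g.toLinearMap.fixedSubmodule ∧ B w x = 1} := by
      rw [← Fintype.card_subtype, ← Nat.card_eq_fintype_card]
      exact Nat.card_congr (Equiv.subtypeEquivRight fun x => and_comm)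
    rw [hcard, natCard_mem_and_apply_eq_one hle, hσ.natCard_eq_pow_finrank, fixedFinrank,
      ← finrank_inf_ker_add_one hle]
    ring

open Classical in
/-- Count the pairs `(x, g)` with `g` fixing `x` in two ways. -/
lemma sum_fixMoment_sup_span [Fintype V] (hσ : IsQuadraticFrobenius σ q) (w : V) (j : ℕ) :
    (-(q : ℝ)) ^ 2 * ∑ x with B w x = 1, fixMoment q B (U ⊔ K ∙ x) j =
      ∑ g ∈ isometryFinset B U with ¬ g.toLinearMap.fixedSubmodule ≤ LinearMap.ker (B w),
        (-(q : ℝ)) ^ ((j + 2) * fixedFinrank g) := by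
  simp only [fixMoment, isometryFinset_sup_span, Finset.sum_filter]
  simp only [← Finset.sum_filter (p := fun x => B w x = 1)]
  rw [Finset.sum_comm, Finset.mul_sum]
  refine Finset.sum_congr rfl fun g _ => ?_
  have hcard := congrArg (Nat.cast (R := ℝ))
    (card_filter_apply_eq_one_and_apply_eq_self (B := B) hσ g w)
  push_cast at hcard
  rw [← Finset.sum_filter, Finset.filter_filter, Finset.sum_const, nsmul_eq_mul, ← mul_assoc,
    neg_sq, hcard, ← (even_two_mul _).neg_pow, ite_mul, zero_mul, ← pow_add, ← add_mul, add_comm 2,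
    ite_not]

open Classical in
lemma fixMoment_add_two [Fintype V] (hσ : IsQuadraticFrobenius σ q) (hB : B.IsSymm)
    (hnd : B.SeparatingLeft) {w : V} (hw : w ∈ U.orthogonalBilin B) (hww : B w w = 1) (j : ℕ) :
    (-(q : ℝ)) ^ j * fixMoment q B U (j + 2) = ((-(q : ℝ)) ^ (j + 2) + q) *
      ∑ x with B w x = 1, fixMoment q B (U ⊔ K ∙ x) j := by
  have hq : -(q : ℝ) ≠ 0 := neg_ne_zero.2 (Nat.cast_ne_zero.2 hσ.ne_zero)
  refine mul_left_cancel₀ (pow_ne_zero 2 hq) ?_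
  rw [mul_left_comm _ (_ + _), sum_fixMoment_sup_span hσ, fixMoment,
    sum_fixedFinrank_eq hσ hB hnd hww hw fun f => (-(q : ℝ)) ^ ((j + 2) * f), Finset.mul_sum,
    Finset.mul_sum, Finset.mul_sum]
  refine Finset.sum_congr rfl fun g hg => ?_
  rw [fixedFinrank, ← finrank_inf_ker_add_one (Finset.mem_filter.1 hg).2, Nat.add_sub_cancel]
  ring

open Classical in
lemma mul_sum_card_isometryFinset_sup_span [Fintype V] (hσ : IsQuadraticFrobenius σ q)
    (hB : B.IsSymm) (hnd : B.SeparatingLeft)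
    (hU : 2 * Module.finrank K U + 2 ≤ Module.finrank K V) {w : V}
    (hw : w ∈ U.orthogonalBilin B) (hww : B w w = 1) :
    q * ∑ x with B w x = 1, ((isometryFinset B (U ⊔ K ∙ x)).card : ℝ) =
      (isometryFinset B U).card * (-(q : ℝ)) ^ (2 * Module.finrank K U) := by
  have hrec := fixMoment_add_two hσ hB hnd hw hww 0
  simp only [fixMoment_two hσ hB hnd hU, fixMoment_zero] at hrec
  refine mul_left_cancel₀ (show (1 + q : ℝ) ≠ 0 by positivity) ?_
  linear_combination -hrec

lemma fixMoment_eq [Finite V] (hσ : IsQuadraticFrobenius σ q) (hB : B.IsSymm)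
    (hnd : B.SeparatingLeft) (j : ℕ) (U : Submodule K V)
    (hU : 2 * Module.finrank K U + j ≤ Module.finrank K V) :
    fixMoment q B U j = (isometryFinset B U).card * (-(q : ℝ)) ^ (j * Module.finrank K U) *
      momentRatio (-(q : ℝ)) j := by
  classical
  have := Fintype.ofFinite V
  induction j using Nat.twoStepInduction generalizing U with
  | zero => simp [fixMoment_zero, momentRatio]
  | one =>
    obtain ⟨w, hw, hww⟩ := exists_mem_orthogonalBilin_apply_self_eq_one hσ hB hnd
      (orthogonalBilin_not_le B (U := U) (by omega))
    rw [fixMoment_one hσ hB hnd hw hww, momentRatio, mul_zero]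
  | more j ih _ =>
    obtain ⟨w, hw, hww⟩ := exists_mem_orthogonalBilin_apply_self_eq_one hσ hB hnd
      (orthogonalBilin_not_le B (U := U) (by omega))
    have hstep : ∀ x ∈ Finset.univ.filter fun x => B w x = 1, fixMoment q B (U ⊔ K ∙ x) j =
        (isometryFinset B (U ⊔ K ∙ x)).card *
          ((-(q : ℝ)) ^ (j * (Module.finrank K U + 1)) * momentRatio (-(q : ℝ)) j) := by
      intro x hx
      have hxU : x ∉ U := fun hmem => zero_ne_one <|
        (apply_eq_zero_of_mem_orthogonalBilin hB hw hmem).symm.trans (Finset.mem_filter.1 hx).2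
      have hrank := Submodule.finrank_sup_span_singleton hxU
      rw [ih _ (by omega), hrank, mul_assoc]
    have hrec := fixMoment_add_two hσ hB hnd hw hww j
    rw [Finset.sum_congr rfl hstep, ← Finset.sum_mul] at hrec
    have hsum := mul_sum_card_isometryFinset_sup_span hσ hB hnd (by omega) hw hww
    have hq : (q : ℝ) ≠ 0 := Nat.cast_ne_zero.2 hσ.ne_zero
    refine mul_left_cancel₀ (pow_ne_zero j (neg_ne_zero.2 hq)) (hrec.trans ?_)
    rw [momentRatio]
    linear_combination ((1 - (-(q : ℝ)) ^ (j + 1)) * (-(q : ℝ)) ^ (j * (Module.finrank K U + 1)) *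
      momentRatio (-(q : ℝ)) j) * hsum

lemma sum_eval_pow_fixedFinrank [Finite V] (hσ : IsQuadraticFrobenius σ q) (hB : B.IsSymm)
    (hnd : B.SeparatingLeft) {P : Polynomial ℝ} (hP : P.natDegree ≤ Module.finrank K V) :
    ∑ g ∈ isometryFinset B ⊥, P.eval ((-(q : ℝ)) ^ fixedFinrank g) =
      (isometryFinset B ⊥).card * momentFunctional (-(q : ℝ)) P := by
  have hmoment : ∀ j ∈ Finset.range (P.natDegree + 1),
      ∑ g ∈ isometryFinset B ⊥, ((-(q : ℝ)) ^ fixedFinrank g) ^ j =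
        (isometryFinset B ⊥).card * momentRatio (-(q : ℝ)) j := by
    intro j hj
    rw [Finset.mem_range] at hj
    simpa [fixMoment, pow_mul'] using fixMoment_eq hσ hB hnd j ⊥ (by rw [finrank_bot]; omega)
  have hfunctional : momentFunctional (-(q : ℝ)) P =
      ∑ j ∈ Finset.range (P.natDegree + 1), P.coeff j * momentRatio (-(q : ℝ)) j := by
    conv_lhs => rw [P.as_sum_range]
    simp only [map_sum, momentFunctional_monomial]
  simp only [Polynomial.eval_eq_sum_range]
  rw [Finset.sum_comm, hfunctional, Finset.mul_sum]
  refine Finset.sum_congr rfl fun j hj => ?_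
  rw [← Finset.mul_sum, hmoment j hj]
  ring

lemma sum_eval_qFalling [Finite V] (hσ : IsQuadraticFrobenius σ q) (hB : B.IsSymm)
    (hnd : B.SeparatingLeft) {j : ℕ} (hj : j ≤ Module.finrank K V) :
    ∑ g ∈ isometryFinset B ⊥, (qFalling (-(q : ℝ)) j).eval ((-(q : ℝ)) ^ fixedFinrank g) =
      (isometryFinset B ⊥).card * (-1) ^ j := by
  rw [sum_eval_pow_fixedFinrank hσ hB hnd ((natDegree_qFalling_le _ _).trans hj),
    momentFunctional_qFalling]

end Moments

section Estimates

open Polynomial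

/-- The finite `q`-Pochhammer symbol `(x; x)_k`. At `x = -q⁻¹` it is the order of the unitary group
of rank `k` divided by `q ^ k ^ 2`. -/
def qPochhammer (x : ℝ) (k : ℕ) : ℝ := ∏ i ∈ Finset.range k, (1 - x ^ (i + 1))

lemma qPochhammer_succ (x : ℝ) (k : ℕ) :
    qPochhammer x (k + 1) = qPochhammer x k * (1 - x ^ (k + 1)) := Finset.prod_range_succ _ _

lemma qPochhammer_pos {x : ℝ} (hx : |x| < 1) (k : ℕ) : 0 < qPochhammer x k := by
  refine Finset.prod_pos fun i _ => sub_pos.2 ((le_abs_self _).trans_lt ?_)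
  rw [abs_pow]
  exact pow_lt_one₀ (abs_nonneg x) hx i.succ_ne_zero

lemma qPochhammer_neg_add_le {x : ℝ} (hx0 : 0 ≤ x) (hx1 : x < 1) (d k : ℕ) :
    (Odd k → qPochhammer (-x) (k + d) ≤ qPochhammer (-x) k) ∧
      (Even k → qPochhammer (-x) (k + d) ≤ qPochhammer (-x) k * (1 + x ^ (k + 1))) := by
  have hpos := fun k => (qPochhammer_pos (x := -x) (by rwa [abs_neg, abs_of_nonneg hx0]) k).le
  induction d generalizing k with
  | zero =>
    exact ⟨fun _ => le_rfl, fun _ => le_mul_of_one_le_right (hpos k) <|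
      le_add_of_nonneg_right (pow_nonneg hx0 _)⟩
  | succ d ih =>
    rw [← add_assoc, add_right_comm]
    constructor
    · intro hk
      have hfactor : (1 - x ^ (k + 1)) * (1 + x ^ (k + 2)) ≤ 1 := by
        have hanti : x ^ (k + 2) ≤ x ^ (k + 1) :=
          pow_le_pow_of_le_one hx0 hx1.le (Nat.le_succ _)
        nlinarith [mul_nonneg (pow_nonneg hx0 (k + 1)) (pow_nonneg hx0 (k + 2))]
      calc qPochhammer (-x) (k + 1 + d)
          ≤ qPochhammer (-x) (k + 1) * (1 + x ^ (k + 2)) := (ih (k + 1)).2 hk.add_one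
        _ = qPochhammer (-x) k * ((1 - x ^ (k + 1)) * (1 + x ^ (k + 2))) := by
            rw [qPochhammer_succ, hk.add_one.neg_pow, mul_assoc]
        _ ≤ qPochhammer (-x) k := mul_le_of_le_one_right (hpos k) hfactor
    · intro hk
      calc qPochhammer (-x) (k + 1 + d)
          ≤ qPochhammer (-x) (k + 1) := (ih (k + 1)).1 hk.add_one
        _ = qPochhammer (-x) k * (1 + x ^ (k + 1)) := by
            rw [qPochhammer_succ, hk.add_one.neg_pow, sub_neg_eq_add]

lemma eval_qFalling_eq_prod (Q x : ℝ) (k : ℕ) :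
    (qFalling Q k).eval x = ∏ i ∈ Finset.range k, (x - Q ^ i) := by
  simp only [qFalling, eval_prod, eval_sub, eval_X, eval_C]

lemma eval_qFalling_pow_eq_zero (Q : ℝ) {k m : ℕ} (h : m < k) :
    (qFalling Q k).eval (Q ^ m) = 0 := by
  rw [eval_qFalling_eq_prod]
  exact Finset.prod_eq_zero (Finset.mem_range.2 h) (sub_self _)

lemma eval_qFalling_pow_self {Q : ℝ} (hQ : Q ≠ 0) (k : ℕ) :
    (qFalling Q k).eval (Q ^ k) = Q ^ k ^ 2 * qPochhammer Q⁻¹ k := by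
  have hfactor : ∀ i ∈ Finset.range k,
      Q ^ k - Q ^ (k - 1 - i) = Q ^ k * (1 - Q⁻¹ ^ (i + 1)) := fun i hi => by
    have hk : Q ^ k = Q ^ (k - 1 - i) * Q ^ (i + 1) := by
      rw [← pow_add]
      congr 1
      have := Finset.mem_range.1 hi
      omega
    rw [mul_sub, mul_one, inv_pow, hk, mul_inv_cancel_right₀ (pow_ne_zero _ hQ)]
  rw [eval_qFalling_eq_prod, ← Finset.prod_range_reflect, Finset.prod_congr rfl hfactor,
    Finset.prod_mul_distrib, Finset.prod_const, Finset.card_range, ← pow_mul, sq, qPochhammer]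

variable {q : ℝ}

lemma eval_qFalling_neg_pow_self (hq : q ≠ 0) (k : ℕ) :
    (qFalling (-q) k).eval ((-q) ^ k) = (-1) ^ k * (q ^ k ^ 2 * qPochhammer (-q⁻¹) k) := by
  have hsign : (-1 : ℝ) ^ k ^ 2 = (-1) ^ k := by
    rw [neg_one_pow_eq_pow_mod_two, Nat.pow_mod, neg_one_pow_eq_pow_mod_two (n := k)]
    rcases Nat.mod_two_eq_zero_or_one k with h | h <;> simp [h]
  rw [eval_qFalling_pow_self (neg_ne_zero.2 hq), inv_neg, neg_pow, hsign, mul_assoc]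

lemma neg_one_pow_mul_neg_pow_sub_nonneg (hq : 1 ≤ q) {m i : ℕ} (h : i ≤ m) :
    0 ≤ (-1) ^ m * ((-q) ^ m - (-q) ^ i) := by
  have hle : q ^ i ≤ q ^ m := pow_le_pow_right₀ hq h
  have hpos : 0 ≤ q ^ i := by positivity
  rw [neg_pow q m, neg_pow q i]
  rcases neg_one_pow_eq_or ℝ m with hm | hm <;> rcases neg_one_pow_eq_or ℝ i with hi | hi <;>
    rw [hm, hi] <;> linarith

lemma neg_one_pow_mul_eval_qFalling_nonneg (hq : 1 ≤ q) (k m : ℕ) :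
    0 ≤ (-1) ^ (m * k) * (qFalling (-q) k).eval ((-q) ^ m) := by
  rcases lt_or_ge m k with hlt | hge
  · rw [eval_qFalling_pow_eq_zero _ hlt, mul_zero]
  · have hprod : (-1 : ℝ) ^ (m * k) * (qFalling (-q) k).eval ((-q) ^ m) =
        ∏ i ∈ Finset.range k, (-1) ^ m * ((-q) ^ m - (-q) ^ i) := by
      rw [eval_qFalling_eq_prod, Finset.prod_mul_distrib, Finset.prod_const, Finset.card_range,
        pow_mul]
    rw [hprod]
    exact Finset.prod_nonneg fun i hi => neg_one_pow_mul_neg_pow_sub_nonneg hq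
      ((Finset.mem_range.1 hi).le.trans hge)

lemma eval_qFalling_mul_sub_nonneg (hq : 1 ≤ q) {k m : ℕ} (hk : Odd k) (hm : m ≠ k) :
    0 ≤ (qFalling (-q) k).eval ((-q) ^ m) * ((-q) ^ m - (-q) ^ (k + 1)) := by
  rcases hm.lt_or_gt with hlt | hgt
  · rw [eval_qFalling_pow_eq_zero _ hlt, zero_mul]
  · have hsign : (-1 : ℝ) ^ (m * k) * (-1) ^ m = 1 := by
      rw [← pow_add, ← mul_add_one, (hk.add_one.mul_left m).neg_one_pow]
    calc (0 : ℝ) ≤ (-1) ^ (m * k) * (qFalling (-q) k).eval ((-q) ^ m) *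
          ((-1) ^ m * ((-q) ^ m - (-q) ^ (k + 1))) :=
          mul_nonneg (neg_one_pow_mul_eval_qFalling_nonneg hq k m)
            (neg_one_pow_mul_neg_pow_sub_nonneg hq hgt)
      _ = (qFalling (-q) k).eval ((-q) ^ m) * ((-q) ^ m - (-q) ^ (k + 1)) := by
          linear_combination (qFalling (-q) k).eval ((-q) ^ m) *
            ((-q) ^ m - (-q) ^ (k + 1)) * hsign

variable {α : Type*} {S : Finset α} {f : α → ℕ} {n k : ℕ}

lemma card_filter_mul_le_sum {F : ℕ → ℝ} (hF : ∀ m ≠ k, 0 ≤ F m) :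
    (S.filter fun g => f g = k).card * F k ≤ ∑ g ∈ S, F (f g) := by
  have hrest : 0 ≤ ∑ g ∈ S with f g ≠ k, F (f g) :=
    Finset.sum_nonneg fun g hg => hF _ (Finset.mem_filter.1 hg).2
  have hlevel : ∑ g ∈ S with f g = k, F (f g) = (S.filter fun g => f g = k).card * F k := by
    rw [← nsmul_eq_mul, ← Finset.sum_const]
    exact Finset.sum_congr rfl fun g hg => by rw [(Finset.mem_filter.1 hg).2]
  rw [← Finset.sum_filter_add_sum_filter_not S fun g => f g = k, hlevel]
  exact le_add_of_nonneg_right hrest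

lemma card_eq_of_sum_eval_qFalling (hq : q ≠ 0) (hf : ∀ g ∈ S, f g ≤ n)
    (hone : (S.filter fun g => f g = n).card = 1)
    (hsum : ∑ g ∈ S, (qFalling (-q) n).eval ((-q) ^ f g) = S.card * (-1) ^ n) :
    (S.card : ℝ) = q ^ n ^ 2 * qPochhammer (-q⁻¹) n := by
  obtain ⟨g₀, hg₀⟩ := Finset.card_eq_one.1 hone
  obtain ⟨hg₀S, hfg₀⟩ := Finset.mem_filter.1 (hg₀ ▸ Finset.mem_singleton_self g₀)
  have hvanish : ∀ g ∈ S, g ≠ g₀ → (qFalling (-q) n).eval ((-q) ^ f g) = 0 := fun g hg hne => by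
    refine eval_qFalling_pow_eq_zero _ ((hf g hg).lt_of_ne fun hfg => hne ?_)
    rw [← Finset.mem_singleton, ← hg₀]
    exact Finset.mem_filter.2 ⟨hg, hfg⟩
  rw [Finset.sum_eq_single_of_mem g₀ hg₀S hvanish, hfg₀, eval_qFalling_neg_pow_self hq,
    mul_comm] at hsum
  exact (mul_right_cancel₀ (pow_ne_zero n (neg_ne_zero.2 one_ne_zero)) hsum).symm

lemma card_filter_mul_le_of_even (hq : 1 ≤ q) (hk : Even k)
    (hsum : ∑ g ∈ S, (qFalling (-q) k).eval ((-q) ^ f g) = S.card * (-1) ^ k) :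
    (S.filter fun g => f g = k).card * (q ^ k ^ 2 * qPochhammer (-q⁻¹) k) ≤ S.card := by
  have hself := eval_qFalling_neg_pow_self (zero_lt_one.trans_le hq).ne' k
  rw [hk.neg_one_pow, one_mul] at hself
  rw [hk.neg_one_pow, mul_one] at hsum
  rw [← hself, ← hsum]
  refine card_filter_mul_le_sum (F := fun m => (qFalling (-q) k).eval ((-q) ^ m)) fun m _ => ?_
  simpa only [(hk.mul_left m).neg_one_pow, one_mul] using
    neg_one_pow_mul_eval_qFalling_nonneg hq k m

lemma sum_eval_qFalling_mul_sub (hk : Odd k)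
    (hsum : ∑ g ∈ S, (qFalling (-q) k).eval ((-q) ^ f g) = S.card * (-1) ^ k)
    (hsum' : ∑ g ∈ S, (qFalling (-q) (k + 1)).eval ((-q) ^ f g) = S.card * (-1) ^ (k + 1)) :
    ∑ g ∈ S, (qFalling (-q) k).eval ((-q) ^ f g) * ((-q) ^ f g - (-q) ^ (k + 1)) =
      S.card * (1 + (q ^ k + q ^ (k + 1))) := by
  have hexpand : ∀ m, (qFalling (-q) k).eval ((-q) ^ m) * ((-q) ^ m - (-q) ^ (k + 1)) =
      (qFalling (-q) (k + 1)).eval ((-q) ^ m) -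
        (q ^ k + q ^ (k + 1)) * (qFalling (-q) k).eval ((-q) ^ m) := fun m => by
    simp only [qFalling_succ, eval_mul, eval_sub, eval_X, eval_C, hk.neg_pow, hk.add_one.neg_pow]
    ring
  simp only [hexpand, Finset.sum_sub_distrib, ← Finset.mul_sum]
  rw [hsum, hsum', hk.neg_one_pow, hk.add_one.neg_one_pow]
  ring

/-- For odd `k` the falling factorial changes sign on the powers of `-q`; the extra factor
`x - (-q) ^ (k + 1)` restores positivity. -/
lemma card_filter_mul_le_of_odd (hq : 1 ≤ q) (hk : Odd k)
    (hsum : ∑ g ∈ S, (qFalling (-q) k).eval ((-q) ^ f g) = S.card * (-1) ^ k)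
    (hsum' : ∑ g ∈ S, (qFalling (-q) (k + 1)).eval ((-q) ^ f g) = S.card * (-1) ^ (k + 1)) :
    (S.filter fun g => f g = k).card * (q ^ k ^ 2 * qPochhammer (-q⁻¹) k) ≤
      S.card * (1 + q⁻¹ ^ (k + 1)) := by
  have hq0 : 0 < q := zero_lt_one.trans_le hq
  set c := q ^ k + q ^ (k + 1) with hc
  have hself : (qFalling (-q) k).eval ((-q) ^ k) * ((-q) ^ k - (-q) ^ (k + 1)) =
      q ^ k ^ 2 * qPochhammer (-q⁻¹) k * c := by
    rw [eval_qFalling_neg_pow_self hq0.ne' k, hk.neg_one_pow, hk.neg_pow, hk.add_one.neg_pow, hc]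
    ring
  have hlevel := card_filter_mul_le_sum (S := S) (f := f)
    (F := fun m => (qFalling (-q) k).eval ((-q) ^ m) * ((-q) ^ m - (-q) ^ (k + 1)))
    fun m hm => eval_qFalling_mul_sub_nonneg hq hk hm
  rw [hself, sum_eval_qFalling_mul_sub hk hsum hsum'] at hlevel
  have hinv : 1 ≤ q⁻¹ ^ (k + 1) * c := by
    rw [hc, mul_add, inv_pow, inv_mul_cancel₀ (pow_ne_zero _ hq0.ne')]
    exact le_add_of_nonneg_left (by positivity)
  refine le_of_mul_le_mul_right ?_ (show 0 < c by positivity)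
  calc _ ≤ S.card * (1 + c) := by rwa [mul_assoc]
    _ ≤ S.card * (q⁻¹ ^ (k + 1) * c + c) := by gcongr
    _ = S.card * (1 + q⁻¹ ^ (k + 1)) * c := by ring

lemma card_filter_mul_le (hq : 1 < q) (hf : ∀ g ∈ S, f g ≤ n)
    (hone : (S.filter fun g => f g = n).card = 1)
    (hsum : ∀ j ≤ n, ∑ g ∈ S, (qFalling (-q) j).eval ((-q) ^ f g) = S.card * (-1) ^ j)
    (hk : k ≤ n) :
    (S.filter fun g => f g = k).card * (q ^ k ^ 2 * qPochhammer (-q⁻¹) k) ≤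
      (1 + q⁻¹ ^ (k + 1)) * (q ^ n ^ 2 * qPochhammer (-q⁻¹) k) := by
  have hx0 : 0 ≤ q⁻¹ := by positivity
  have hx1 : q⁻¹ < 1 := inv_lt_one_of_one_lt₀ hq
  have hpos := qPochhammer_pos (x := -q⁻¹) (by rwa [abs_neg, abs_of_nonneg hx0])
  have hcard := card_eq_of_sum_eval_qFalling (by positivity) hf hone (hsum n le_rfl)
  have hbound := qPochhammer_neg_add_le hx0 hx1 (n - k) k
  rw [Nat.add_sub_cancel' hk] at hbound
  rcases Nat.even_or_odd k with heven | hodd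
  · calc _ ≤ (S.card : ℝ) := card_filter_mul_le_of_even hq.le heven (hsum k hk)
      _ = q ^ n ^ 2 * qPochhammer (-q⁻¹) n := hcard
      _ ≤ q ^ n ^ 2 * (qPochhammer (-q⁻¹) k * (1 + q⁻¹ ^ (k + 1))) := by
          gcongr
          exact hbound.2 heven
      _ = (1 + q⁻¹ ^ (k + 1)) * (q ^ n ^ 2 * qPochhammer (-q⁻¹) k) := by ring
  · rcases hk.eq_or_lt with rfl | hlt
    · rw [hone, Nat.cast_one]
      have := hpos k
      gcongr
      exact le_add_of_nonneg_right (by positivity)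
    · calc _ ≤ S.card * (1 + q⁻¹ ^ (k + 1)) :=
            card_filter_mul_le_of_odd hq.le hodd (hsum k hk) (hsum (k + 1) hlt)
        _ = q ^ n ^ 2 * qPochhammer (-q⁻¹) n * (1 + q⁻¹ ^ (k + 1)) := by rw [hcard]
        _ ≤ q ^ n ^ 2 * qPochhammer (-q⁻¹) k * (1 + q⁻¹ ^ (k + 1)) := by
            gcongr
            exact hbound.1 hodd
        _ = (1 + q⁻¹ ^ (k + 1)) * (q ^ n ^ 2 * qPochhammer (-q⁻¹) k) := by ring

end Estimates

section Count

variable {K V : Type*} [Field K] [AddCommGroup V] [Module K V] {σ : K →+* K}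
  {B : V →ₛₗ[σ] V →ₗ[K] K} {q k : ℕ}

lemma fixedFinrank_eq_finrank_iff [FiniteDimensional K V] {g : V ≃ₗ[K] V} :
    fixedFinrank g = Module.finrank K V ↔ g = 1 := by
  have htop : g.toLinearMap.fixedSubmodule = ⊤ ↔ g = 1 := LinearEquiv.fixedSubmodule_eq_top_iff
  rw [← htop]
  exact ⟨Submodule.eq_top_of_finrank_eq, fun h => by rw [fixedFinrank, h, finrank_top]⟩

lemma card_filter_fixedFinrank_eq_finrank [Finite V] (B : V →ₛₗ[σ] V →ₗ[K] K) :
    ((isometryFinset B ⊥).filter fun g => fixedFinrank g = Module.finrank K V).card = 1 := by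
  have : FiniteDimensional K V := inferInstance
  refine Finset.card_eq_one.2 ⟨1, ?_⟩
  ext g
  rw [Finset.mem_filter, fixedFinrank_eq_finrank_iff, Finset.mem_singleton, and_iff_right_iff_imp]
  rintro rfl
  exact mem_isometryFinset.2 (one_mem _)

theorem card_filter_fixedFinrank_le [Finite V] (hσ : IsQuadraticFrobenius σ q) (hB : B.IsSymm)
    (hnd : B.SeparatingLeft) (hk : k ≤ Module.finrank K V) :
    (((isometryFinset B ⊥).filter fun g => fixedFinrank g = k).card : ℝ) ≤
      (1 + (q : ℝ)⁻¹ ^ (k + 1)) * (q : ℝ) ^ (Module.finrank K V ^ 2 - k ^ 2) := by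
  have hq : 1 < (q : ℝ) := Nat.one_lt_cast.2 hσ.two_le
  have habs : |-(q : ℝ)⁻¹| < 1 := by
    rw [abs_neg, abs_of_nonneg (by positivity)]
    exact inv_lt_one_of_one_lt₀ hq
  have hpow : (q : ℝ) ^ Module.finrank K V ^ 2 =
      q ^ (Module.finrank K V ^ 2 - k ^ 2) * q ^ k ^ 2 := by
    rw [← pow_add, Nat.sub_add_cancel (Nat.pow_le_pow_left hk 2)]
  have hle := card_filter_mul_le hq (S := isometryFinset B ⊥) (f := fixedFinrank)
    (fun g _ => Submodule.finrank_le _) (card_filter_fixedFinrank_eq_finrank B)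
    (fun j hj => sum_eval_qFalling hσ hB hnd hj) hk
  refine le_of_mul_le_mul_right (hle.trans_eq ?_)
    (mul_pos (by positivity) (qPochhammer_pos habs k))
  rw [hpow, mul_assoc, mul_assoc]

end Count

section Matrices

variable {K : Type} [Field K] {n : ℕ} {σ : K →+* K}

lemma fixdim_eq_fixedFinrank (g : (Matrix (Fin n) (Fin n) K)ˣ) :
    fixdim g = fixedFinrank (LinearMap.GeneralLinearGroup.generalLinearEquiv K _
      (Matrix.GeneralLinearGroup.toLin g)) := by
  have hker : LinearMap.ker (Matrix.toLin' (g.1 - 1)) =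
      (LinearMap.GeneralLinearGroup.generalLinearEquiv K _
        (Matrix.GeneralLinearGroup.toLin g)).toLinearMap.fixedSubmodule := by
    ext x
    rw [LinearMap.mem_ker, Matrix.toLin'_apply, Matrix.sub_mulVec, Matrix.one_mulVec, sub_eq_zero]
    rfl
  rw [fixdim, fixedFinrank, hker]

lemma natCard_fixdim_eq_card_filter [Finite K] (B : (Fin n → K) →ₛₗ[σ] (Fin n → K) →ₗ[K] K)
    (k : ℕ) :
    Nat.card {g : formIsometry fun x y => B x y // fixdim (g : (Matrix (Fin n) (Fin n) K)ˣ) = k} =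
      ((isometryFinset B ⊥).filter fun g => fixedFinrank g = k).card := by
  let e := Matrix.GeneralLinearGroup.toLin.trans
    (LinearMap.GeneralLinearGroup.generalLinearEquiv K (Fin n → K))
  have hmem : ∀ g, g ∈ formIsometry (fun x y => B x y) ↔ e g ∈ isometryFixing B ⊥ := fun g => by
    rw [mem_isometryFixing, and_iff_left]
    · rfl
    · rintro _ rfl
      exact map_zero _
  rw [← Fintype.card_coe, ← Nat.card_eq_fintype_card]
  refine Nat.card_congr ((Equiv.subtypeSubtypeEquivSubtypeInter
    (· ∈ formIsometry fun x y => B x y) fun g => fixdim g = k).trans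
      (e.toEquiv.subtypeEquiv fun g => ?_))
  rw [Finset.mem_filter, mem_isometryFinset, hmem, fixdim_eq_fixedFinrank]
  rfl

end Matrices

/-- **Corollary (counting elements of `GU_n(q)` by fixed space).**  Let `E = F_{q²}` and let
`B` be a nondegenerate Hermitian form on `E^n` (semilinear with respect to the Frobenius
`x ↦ x^q` in the first argument, linear in the second, with `(w|v) = (v|w)^q`), and let
`GU_n(q)` be its isometry group.  Then for `0 ≤ k ≤ n`, the number of elements of `GU_n(q)`
whose fixed space has dimension `k` is at most `(1 + q^{−(k+1)})·q^{n²−k²}`. -/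
theorem gu_count_fixed_space {E : Type} [Field E] [Fintype E]
    {q n : ℕ} (hq : Fintype.card E = q ^ 2) (hn : 1 ≤ n)
    (B : (Fin n → E) → (Fin n → E) → E)
    (hadd₁ : ∀ x x' y, B (x + x') y = B x y + B x' y)
    (hsmul₁ : ∀ (a : E) (x y : Fin n → E), B (a • x) y = a ^ q * B x y)
    (hadd₂ : ∀ x y y', B x (y + y') = B x y + B x y')
    (hsmul₂ : ∀ (a : E) (x y : Fin n → E), B x (a • y) = a * B x y)
    (hconj : ∀ x y, B y x = (B x y) ^ q)
    (hnd : ∀ x, (∀ y, B x y = 0) → x = 0)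
    (k : ℕ) (hk : k ≤ n) :
    (Nat.card {g : ↥(formIsometry B) //
        fixdim (g : (Matrix (Fin n) (Fin n) E)ˣ) = k} : ℝ) ≤
      (1 + (q : ℝ) ^ (-(k + 1 : ℤ))) * (q : ℝ) ^ (n ^ 2 - k ^ 2) := by
  obtain ⟨σ, hσ⟩ := exists_isQuadraticFrobenius (Nat.card_eq_fintype_card.trans hq)
  let H : (Fin n → E) →ₛₗ[σ] (Fin n → E) →ₗ[E] E :=
    LinearMap.mk₂'ₛₗ σ (RingHom.id E) B hadd₁
      (fun a x y => (hσ.apply_eq a).symm ▸ hsmul₁ a x y) hadd₂ hsmul₂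
  have hH : H.IsSymm := ⟨fun x y => (hσ.apply_eq _).trans (hconj x y).symm⟩
  have hle := card_filter_fixedFinrank_le hσ hH hnd (hk.trans_eq (Module.finrank_fin_fun E).symm)
  rw [Module.finrank_fin_fun, ← natCard_fixdim_eq_card_filter] at hle
  rw [zpow_neg, ← inv_zpow]
  exact_mod_cast hle
end
end

section
/- Let F be a finite field with q elements, let V = F^n with n ≥ 2, and let X_V = {(v, w*) ∈ V × V* : v ≠ 0, w* ≠ 0, w*(v) = 0}, so |X_V| = (q^n − 1)(q^{n−1} − 1). Then the number of pairs ((v_1, w_1*), (v_2, w_2*)) ∈ X_V × X_V such that v_1, v_2 are linearly independent and w_1*, w_2* are linearly independent equals (q^{2n−1} − 3q^n + q^{n−1} + q²)·(q^n − 1)(q^{n−1} − 1). -/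
/-!
Fix `(v, w) ∈ X_V` and count the pairs `(y, z)` with `z y = 0`, `y ∉ ⟨v⟩` and `z ∉ ⟨w⟩` by
choosing `y` first. The form `z` then ranges over the `(n - 1)`-dimensional space of forms that
vanish at `y`, with `⟨w⟩` removed, and the only question is whether `w` lies in that space:
* if `w y = 0`, which holds for `q ^ (n - 1) - q` vectors `y ∉ ⟨v⟩`, there are `q ^ (n - 1) - q`
  choices for `z`;
* if `w y ≠ 0`, which holds for `q ^ n - q ^ (n - 1)` vectors `y`, all outside `⟨v⟩`, only `z = 0`
  is lost and there are `q ^ (n - 1) - 1` choices.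

The sum of the two products does not depend on `(v, w)`, so it gets multiplied by `|X_V|`.
-/

open Module

/-- The set `⋃ a ∈ s, {a} × t a` of pairs with first component in `s`, whose second component is
restricted by the first. The counts below all choose the first component first. -/
def fiberedProd {α β : Type*} (s : Set α) (t : α → Set β) : Set (α × β) :=
  {p | p.1 ∈ s ∧ p.2 ∈ t p.1}

theorem cast_ncard_fiberedProd {R α β : Type*} [NonAssocSemiring R] {s : Set α} {t : α → Set β}
    [Finite s] [∀ a, Finite (t a)] {c : R} (h : ∀ a ∈ s, ((t a).ncard : R) = c) :
    ((fiberedProd s t).ncard : R) = s.ncard * c := by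
  let e : fiberedProd s t ≃ Σ a : s, t a :=
    { toFun p := ⟨⟨p.1.1, p.2.1⟩, ⟨p.1.2, p.2.2⟩⟩
      invFun x := ⟨(x.1, x.2), x.1.2, x.2.2⟩ }
  have := Fintype.ofFinite s
  calc ((fiberedProd s t).ncard : R)
      = ∑ a : s, ((t a).ncard : R) := by
        rw [← Nat.card_coe_set_eq, Nat.card_congr e, Nat.card_sigma, Nat.cast_sum]
        simp only [Nat.card_coe_set_eq]
    _ = ∑ _a : s, c := Finset.sum_congr rfl fun a _ ↦ h a a.2
    _ = s.ncard * c := by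
        rw [Finset.sum_const, nsmul_eq_mul, Finset.card_univ, ← Nat.card_eq_fintype_card,
          Nat.card_coe_set_eq]

section DivisionRing

variable {K M : Type*} [DivisionRing K] [AddCommGroup M] [Module K M]

theorem linearIndependent_pair_iff_notMem_span {x y : M} (hx : x ≠ 0) :
    LinearIndependent K ![x, y] ↔ y ∉ K ∙ x := by
  simp [LinearIndependent.pair_iff' hx, Submodule.mem_span_singleton]

variable [Finite K] [FiniteDimensional K M]

theorem ncard_submodule_sdiff (A B : Submodule K M) :
    (((A : Set M) \ B).ncard : ℤ) =
      (Nat.card K : ℤ) ^ finrank K A - (Nat.card K : ℤ) ^ finrank K ↥(A ⊓ B) := by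
  have : Finite M := Module.finite_of_finite K
  have card_eq (C : Submodule K M) : (C : Set M).ncard = Nat.card K ^ finrank K C :=
    Module.natCard_eq_pow_finrank
  rw [← Set.sdiff_self_inter, ← Submodule.coe_inf,
    Set.cast_ncard_sdiff (SetLike.coe_subset_coe.mpr inf_le_left) (Set.toFinite _),
    card_eq, card_eq, Nat.cast_pow, Nat.cast_pow]

theorem ncard_submodule_compl (A : Submodule K M) :
    (((A : Set M)ᶜ).ncard : ℤ) =
      (Nat.card K : ℤ) ^ finrank K M - (Nat.card K : ℤ) ^ finrank K A := by
  rw [Set.compl_eq_univ_sdiff, ← Submodule.top_coe (R := K), ncard_submodule_sdiff, top_inf_eq,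
    finrank_top]

theorem ncard_submodule_sdiff_span_singleton_of_mem {A : Submodule K M} {x : M} (hx : x ≠ 0)
    (hxA : x ∈ A) :
    (((A : Set M) \ (K ∙ x)).ncard : ℤ) = (Nat.card K : ℤ) ^ finrank K A - Nat.card K := by
  have hle : K ∙ x ≤ A := (Submodule.span_singleton_le_iff_mem x A).mpr hxA
  rw [ncard_submodule_sdiff, inf_eq_right.mpr hle, finrank_span_singleton hx, pow_one]

theorem ncard_submodule_sdiff_span_singleton_of_notMem {A : Submodule K M} {x : M}
    (hxA : x ∉ A) :
    (((A : Set M) \ (K ∙ x)).ncard : ℤ) = (Nat.card K : ℤ) ^ finrank K A - 1 := by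
  rw [ncard_submodule_sdiff, (Submodule.disjoint_span_singleton_of_notMem hxA).eq_bot,
    finrank_bot, pow_zero]

end DivisionRing

section Incidence

variable {F V : Type*} [Field F] [AddCommGroup V] [Module F V]

variable (F V) in
/-- The set `X_V` of pairs `(v, w)` of a nonzero vector and a nonzero linear form on `V` with
`w v = 0`. -/
def incidentPairs : Set (V × Dual F V) :=
  {p | p.1 ≠ 0 ∧ p.2 ≠ 0 ∧ p.2 p.1 = 0}

/-- The pairs `(y, z) ∈ X_V` that are independent of the pair `p = (v, w)` in both
components. -/
def independentIncidentPairs (p : V × Dual F V) : Set (V × Dual F V) :=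
  {r | r ∈ incidentPairs F V ∧
    LinearIndependent F ![p.1, r.1] ∧ LinearIndependent F ![p.2, r.2]}

theorem mem_independentIncidentPairs_iff {v y : V} {w z : Dual F V} (hv : v ≠ 0) (hw : w ≠ 0) :
    (y, z) ∈ independentIncidentPairs (v, w) ↔ y ∉ F ∙ v ∧ z ∉ F ∙ w ∧ z y = 0 := by
  simp only [independentIncidentPairs, incidentPairs, Set.mem_ofPred_eq,
    linearIndependent_pair_iff_notMem_span hv, linearIndependent_pair_iff_notMem_span hw]
  refine ⟨fun ⟨⟨_, _, h⟩, hy, hz⟩ ↦ ⟨hy, hz, h⟩, fun ⟨hy, hz, h⟩ ↦ ⟨⟨?_, ?_, h⟩, hy, hz⟩⟩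
  · exact (ne_of_mem_of_not_mem (zero_mem _) hy).symm
  · exact (ne_of_mem_of_not_mem (zero_mem _) hz).symm

theorem independentIncidentPairs_eq_union {v : V} {w : Dual F V} (hv : v ≠ 0) (hw : w ≠ 0)
    (hwv : w v = 0) :
    independentIncidentPairs (v, w) =
      fiberedProd ((w.ker : Set V) \ (F ∙ v)) (fun y ↦ (Dual.eval F V y).ker \ (F ∙ w)) ∪
        fiberedProd (w.ker : Set V)ᶜ (fun y ↦ (Dual.eval F V y).ker \ (F ∙ w)) := by
  ext ⟨y, z⟩
  have hle : y ∈ F ∙ v → w y = 0 :=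
    fun hy ↦ (Submodule.span_singleton_le_iff_mem v w.ker).mpr hwv hy
  simp only [mem_independentIncidentPairs_iff hv hw, fiberedProd, Set.mem_union,
    Set.mem_ofPred_eq, Set.mem_sdiff, Set.mem_compl_iff, SetLike.mem_coe, LinearMap.mem_ker,
    Dual.eval_apply]
  tauto

variable [FiniteDimensional F V]

theorem finrank_ker_of_ne_zero {f : Dual F V} (hf : f ≠ 0) :
    finrank F f.ker = finrank F V - 1 :=
  Nat.eq_sub_of_add_eq (Dual.finrank_ker_add_one_of_ne_zero hf)

theorem finrank_ker_eval_of_ne_zero {v : V} (hv : v ≠ 0) :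
    finrank F (Dual.eval F V v).ker = finrank F V - 1 := by
  rw [finrank_ker_of_ne_zero ((eval_apply_eq_zero_iff F v).not.mpr hv), Subspace.dual_finrank_eq]

variable [Finite F]

theorem ncard_incidentPairs :
    ((incidentPairs F V).ncard : ℤ) =
      ((Nat.card F : ℤ) ^ finrank F V - 1) * ((Nat.card F : ℤ) ^ (finrank F V - 1) - 1) := by
  have : Finite V := Module.finite_of_finite F
  have : Finite (Dual F V) := Module.finite_of_finite F
  have hfibers : incidentPairs F V = fiberedProd ((⊥ : Submodule F V) : Set V)ᶜ
      (fun v ↦ (Dual.eval F V v).ker \ (⊥ : Submodule F (Dual F V))) := by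
    ext p
    simp [incidentPairs, fiberedProd, and_comm]
  rw [hfibers, cast_ncard_fiberedProd, ncard_submodule_compl, finrank_bot, pow_zero]
  intro v hv
  rw [ncard_submodule_sdiff, inf_bot_eq, finrank_bot, pow_zero, finrank_ker_eval_of_ne_zero hv]

theorem ncard_independentIncidentPairs_eq_add {v : V} {w : Dual F V} (hv : v ≠ 0) (hw : w ≠ 0)
    (hwv : w v = 0) :
    ((independentIncidentPairs (v, w)).ncard : ℤ) =
      ((Nat.card F : ℤ) ^ (finrank F V - 1) - Nat.card F) *
        ((Nat.card F : ℤ) ^ (finrank F V - 1) - Nat.card F) +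
      ((Nat.card F : ℤ) ^ finrank F V - (Nat.card F : ℤ) ^ (finrank F V - 1)) *
        ((Nat.card F : ℤ) ^ (finrank F V - 1) - 1) := by
  have : Finite V := Module.finite_of_finite F
  have : Finite (Dual F V) := Module.finite_of_finite F
  rw [independentIncidentPairs_eq_union hv hw hwv, Set.ncard_union_eq, Nat.cast_add]
  · congr 1
    · rw [cast_ncard_fiberedProd, ncard_submodule_sdiff_span_singleton_of_mem hv hwv,
        finrank_ker_of_ne_zero hw]
      rintro y ⟨hwy, hy⟩
      have hy₀ : y ≠ 0 := (ne_of_mem_of_not_mem (zero_mem _) hy).symm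
      have hw_mem : w ∈ (Dual.eval F V y).ker := hwy
      rw [ncard_submodule_sdiff_span_singleton_of_mem hw hw_mem, finrank_ker_eval_of_ne_zero hy₀]
    · rw [cast_ncard_fiberedProd, ncard_submodule_compl, finrank_ker_of_ne_zero hw]
      intro y hwy
      have hy₀ : y ≠ 0 := (ne_of_mem_of_not_mem (zero_mem _) hwy).symm
      have hw_notMem : w ∉ (Dual.eval F V y).ker := hwy
      rw [ncard_submodule_sdiff_span_singleton_of_notMem hw_notMem, finrank_ker_eval_of_ne_zero hy₀]
  · exact Set.disjoint_left.mpr fun _ hr hr' ↦ hr'.1 hr.1.1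

theorem ncard_independentIncidentPairs {p : V × Dual F V} (hp : p ∈ incidentPairs F V) :
    ((independentIncidentPairs p).ncard : ℤ) =
      (Nat.card F : ℤ) ^ (2 * finrank F V - 1) - 3 * (Nat.card F : ℤ) ^ finrank F V +
        (Nat.card F : ℤ) ^ (finrank F V - 1) + (Nat.card F : ℤ) ^ 2 := by
  obtain ⟨v, w⟩ := p
  obtain ⟨hv, hw, hwv⟩ := hp
  have hpos : 0 < finrank F V := finrank_pos_iff_exists_ne_zero.mpr ⟨v, hv⟩
  obtain ⟨m, hm⟩ := Nat.exists_eq_add_one.mpr hpos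
  rw [ncard_independentIncidentPairs_eq_add hv hw hwv, hm, Nat.add_sub_cancel,
    show 2 * (m + 1) - 1 = 2 * m + 1 by lia]
  ring

theorem count_independent_pairs_in_XV_general {q n : ℕ} (hq : Nat.card F = q)
    (hn : finrank F V = n) :
    ((incidentPairs F V).ncard : ℤ) = ((q : ℤ) ^ n - 1) * ((q : ℤ) ^ (n - 1) - 1) ∧
    ({p : (V × Dual F V) × (V × Dual F V) | p.1 ∈ incidentPairs F V ∧ p.2 ∈ incidentPairs F V ∧
        LinearIndependent F ![p.1.1, p.2.1] ∧ LinearIndependent F ![p.1.2, p.2.2]}.ncard : ℤ) =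
      ((q : ℤ) ^ (2 * n - 1) - 3 * (q : ℤ) ^ n + (q : ℤ) ^ (n - 1) + (q : ℤ) ^ 2) *
        (((q : ℤ) ^ n - 1) * ((q : ℤ) ^ (n - 1) - 1)) := by
  subst hq hn
  have : Finite V := Module.finite_of_finite F
  have : Finite (Dual F V) := Module.finite_of_finite F
  refine ⟨ncard_incidentPairs, ?_⟩
  rw [← ncard_incidentPairs, mul_comm]
  exact cast_ncard_fiberedProd (t := independentIncidentPairs)
    fun _ hp ↦ ncard_independentIncidentPairs hp

end Incidence

/-- **Lemma (counting pairs in `X_V`).**  Let `F` be a finite field with `q` elements,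
`V = F^n` with `n ≥ 2`, and `X_V = {(v,w*) ∈ V × V* : v ≠ 0, w* ≠ 0, w*(v) = 0}`, so that
`|X_V| = (q^n − 1)(q^{n−1} − 1)`.  Then the number of pairs
`((v₁,w₁*),(v₂,w₂*)) ∈ X_V × X_V` with `v₁,v₂` linearly independent and `w₁*,w₂*`
linearly independent equals `(q^{2n−1} − 3q^n + q^{n−1} + q²)·(q^n − 1)(q^{n−1} − 1)`. -/
theorem count_independent_pairs_in_XV {F : Type*} [Field F] [Fintype F]
    {q n : ℕ} (hq : Fintype.card F = q) (hn : 2 ≤ n) :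
    (Nat.card {p : (Fin n → F) × ((Fin n → F) →ₗ[F] F) //
        p.1 ≠ 0 ∧ p.2 ≠ 0 ∧ p.2 p.1 = 0} : ℤ) =
      ((q : ℤ) ^ n - 1) * ((q : ℤ) ^ (n - 1) - 1) ∧
    (Nat.card {p : ((Fin n → F) × ((Fin n → F) →ₗ[F] F)) ×
        ((Fin n → F) × ((Fin n → F) →ₗ[F] F)) //
        (p.1.1 ≠ 0 ∧ p.1.2 ≠ 0 ∧ p.1.2 p.1.1 = 0) ∧
        (p.2.1 ≠ 0 ∧ p.2.2 ≠ 0 ∧ p.2.2 p.2.1 = 0) ∧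
        LinearIndependent F ![p.1.1, p.2.1] ∧
        LinearIndependent F ![p.1.2, p.2.2]} : ℤ) =
      ((q : ℤ) ^ (2 * n - 1) - 3 * (q : ℤ) ^ n + (q : ℤ) ^ (n - 1) + (q : ℤ) ^ 2) *
        (((q : ℤ) ^ n - 1) * ((q : ℤ) ^ (n - 1) - 1)) :=
  count_independent_pairs_in_XV_general (Nat.card_eq_fintype_card.trans hq) (finrank_fin_fun F)
end

section
/- Let F be a finite field with q elements and V = F^n with n ≥ 2. If T_1, T_2 are two independent uniformly random transvections in GL(V), then the probability that the fixed point subspace ker(T_1T_2 − I) has codimension e in V equals: (q^{2n−1} − 3q^n + q^{n−1} + q²)/((q^n−1)(q^{n−1}−1)) if e = 2; (2q^n − 2q^{n−1} − q² − q + 2)/((q^n−1)(q^{n−1}−1)) if e = 1; and (q−1)/((q^n−1)(q^{n−1}−1)) if e = 0. -/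
noncomputable section

/-- `T` is a transvection of `GL(F^m)`: `T = I + v w*` with `v ∈ V`, `w* ∈ V*` nonzero
and `w*(v) = 0`, i.e. `T : y ↦ y + w*(y)·v`. -/
def IsGLTransvection {F : Type*} [Field F] {m : ℕ} (T : Matrix (Fin m) (Fin m) F) : Prop :=
  ∃ v : Fin m → F, v ≠ 0 ∧ ∃ w : (Fin m → F) →ₗ[F] F, w ≠ 0 ∧ w v = 0 ∧
    ∀ y, T.mulVec y = y + w y • v

/-- The number of transvections in `GL_m(F)`. -/
def glTransvCount (F : Type*) [Field F] [Fintype F] (m : ℕ) : ℕ :=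
  Nat.card {T : Matrix (Fin m) (Fin m) F // IsGLTransvection T}

/-- The number of ordered pairs of transvections in `GL_m(F)` whose product has fixed
space of dimension `m − e`. -/
def glTransvPairCount (F : Type*) [Field F] [Fintype F] (m e : ℕ) : ℕ :=
  Nat.card {p : Matrix (Fin m) (Fin m) F × Matrix (Fin m) (Fin m) F //
    IsGLTransvection p.1 ∧ IsGLTransvection p.2 ∧
    Module.finrank F (LinearMap.ker (Matrix.toLin' (p.1 * p.2 - 1))) = m - e}

/-!
Fix `T = transvection f v`. A transvection `T' = transvection g u` has `rank (T T' - 1) = 2` unless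
`u` is proportional to `v` or `g` is proportional to `f`; in those cases the rank is at most `1`,
and it is `0` only for `T' = T⁻¹`. There are `q ^ (n - 1) - 1` transvections of each of the two
exceptional kinds, and `q - 1` of both kinds, so the number of partners `T'` in each codimension
does not depend on `T`.
-/

open Module LinearMap

lemma ncard_setOf_fst_mem_and_snd_mem {α β : Type*} [Finite α] [Finite β] {s : Set α}
    {t : α → Set β} {c : ℕ} (h : ∀ a ∈ s, (t a).ncard = c) :
    {p : α × β | p.1 ∈ s ∧ p.2 ∈ t p.1}.ncard = s.ncard * c := by
  have := Fintype.ofFinite s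
  let e : {p : α × β | p.1 ∈ s ∧ p.2 ∈ t p.1} ≃ Σ a : s, t a :=
    { toFun := fun p => ⟨⟨p.1.1, p.2.1⟩, ⟨p.1.2, p.2.2⟩⟩
      invFun := fun x => ⟨(x.1, x.2), x.1.2, x.2.2⟩ }
  have hfiber (a : s) : Nat.card (t a) = c := (Nat.card_coe_set_eq _).trans (h a a.2)
  rw [← Nat.card_coe_set_eq, Nat.card_congr e, Nat.card_sigma,
    Finset.sum_congr rfl fun a _ => hfiber a, Finset.sum_const, Finset.card_univ,
    ← Nat.card_eq_fintype_card, Nat.card_coe_set_eq, smul_eq_mul]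

lemma ncard_mul_eq_ncard_mul {α β : Type*} [Finite α] [Finite β] {s : Set α} {t : Set β}
    {r : α → β → Prop} {c d : ℕ} (hc : ∀ a ∈ s, {b ∈ t | r a b}.ncard = c)
    (hd : ∀ b ∈ t, {a ∈ s | r a b}.ncard = d) : s.ncard * c = t.ncard * d := by
  rw [← ncard_setOf_fst_mem_and_snd_mem hc, ← ncard_setOf_fst_mem_and_snd_mem hd,
    ← Set.ncard_image_of_injective _ Prod.swap_injective, Set.image_swap_eq_preimage_swap]
  congr 1
  ext
  simp only [Set.mem_preimage, Set.mem_ofPred_eq, Prod.fst_swap, Prod.snd_swap]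
  tauto

section LinearAlgebra

variable {K V : Type*} [Field K] [AddCommGroup V] [Module K V]

lemma mem_span_singleton_symm {u v : V} (hv : v ≠ 0) (h : v ∈ K ∙ u) : u ∈ K ∙ v := by
  obtain ⟨a, rfl⟩ := Submodule.mem_span_singleton.1 h
  exact Submodule.mem_span_singleton.2 ⟨a⁻¹, inv_smul_smul₀ (smul_ne_zero_iff.1 hv).1 u⟩

lemma surjective_pi_of_linearIndependent {ι : Type*} [Finite ι] {f : ι → Dual K V}
    (hf : LinearIndependent K f) : Function.Surjective (LinearMap.pi f) := by
  have hspan := span_flip_eq_top_iff_linearIndependent.2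
    (hf.map' (LinearMap.ltoFun K V K K) (LinearMap.ker_eq_bot.2 DFunLike.coe_injective))
  rw [← LinearMap.range_eq_top, ← hspan]
  exact (Submodule.span_eq (LinearMap.range (LinearMap.pi f))).symm

lemma finrank_range_sum_smulRight {ι : Type*} [Fintype ι] {f : ι → Dual K V} {v : ι → V}
    (hf : LinearIndependent K f) (hv : LinearIndependent K v) :
    finrank K (range (∑ i, (f i).smulRight (v i))) = Fintype.card ι := by
  have hfactor : ∑ i, (f i).smulRight (v i) = Fintype.linearCombination K v ∘ₗ LinearMap.pi f := by
    ext x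
    simp [Fintype.linearCombination_apply]
  rw [hfactor, LinearMap.range_comp_of_range_eq_top _
    (LinearMap.range_eq_top.2 (surjective_pi_of_linearIndependent hf)),
    Fintype.range_linearCombination, finrank_span_eq_card hv]

lemma ncard_submodule_sdiff_zero_add_one [Finite K] (W : Submodule K V) [Module.Finite K W] :
    ((W : Set V) \ {0}).ncard + 1 = Nat.card K ^ finrank K W := by
  have : Finite W := Module.finite_of_finite K
  rw [Set.ncard_sdiff_singleton_add_one W.zero_mem (Set.toFinite _),
    ← Module.natCard_eq_pow_finrank (V := W)]
  rfl

lemma ncard_span_singleton_sdiff_zero_add_one [Finite K] {v : V} (hv : v ≠ 0) :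
    (((K ∙ v : Submodule K V) : Set V) \ {0}).ncard + 1 = Nat.card K := by
  rw [ncard_submodule_sdiff_zero_add_one, finrank_span_singleton hv, pow_one]

lemma ncard_ker_sdiff_zero_add_one [Finite K] [Module.Finite K V] {f : Dual K V} (hf : f ≠ 0) :
    ((ker f : Set V) \ {0}).ncard + 1 = Nat.card K ^ (finrank K V - 1) := by
  rw [ncard_submodule_sdiff_zero_add_one, ← Dual.finrank_ker_add_one_of_ne_zero hf,
    Nat.add_sub_cancel]

end LinearAlgebra

section FixedCodim

variable {K V : Type*} [Field K] [AddCommGroup V] [Module K V] {f g : Dual K V} {u v : V}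

/-- The codimension of the fixed point subspace `ker (T - 1)` of an endomorphism `T`. -/
def fixedCodim (T : End K V) : ℕ :=
  finrank K (V ⧸ T.fixedSubmodule)

lemma fixedCodim_eq_finrank_range (T : End K V) : fixedCodim T = finrank K (range (T - 1)) := by
  rw [fixedCodim, fixedSubmodule_eq_ker]
  exact (quotKerEquivRange (T - 1)).finrank_eq

lemma fixedCodim_eq_zero_iff [Module.Finite K V] {T : End K V} : fixedCodim T = 0 ↔ T = 1 := by
  rw [fixedCodim_eq_finrank_range, Submodule.finrank_eq_zero, range_eq_bot, sub_eq_zero]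

lemma transvection_eq_one_add_smulRight (f : Dual K V) (v : V) :
    transvection f v = 1 + f.smulRight v :=
  rfl

lemma transvection_mul_transvection_sub_one (f g : Dual K V) (u v : V) :
    transvection f v * transvection g u - 1 = (f + f u • g).smulRight v + g.smulRight u := by
  ext x
  simp only [Module.End.mul_apply, transvection.apply, LinearMap.sub_apply, LinearMap.add_apply,
    Module.End.one_apply, smulRight_apply, LinearMap.smul_apply, map_add, map_smul, smul_eq_mul]
  module

lemma fixedCodim_transvection_le_one (f : Dual K V) (v : V) :
    fixedCodim (transvection f v) ≤ 1 := by
  rw [fixedCodim_eq_finrank_range, transvection_eq_one_add_smulRight, add_sub_cancel_left]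
  have hle : range (f.smulRight v) ≤ K ∙ v := by
    rintro _ ⟨x, rfl⟩
    exact Submodule.smul_mem _ _ (Submodule.mem_span_singleton_self v)
  exact (Submodule.finrank_mono hle).trans (by simpa using finrank_span_le_card (R := K) {v})

lemma fixedCodim_transvection_mul_transvection_eq_two (hfg : LinearIndependent K ![f, g])
    (hvu : LinearIndependent K ![v, u]) :
    fixedCodim (transvection f v * transvection g u) = 2 := by
  have hfg' : LinearIndependent K ![f + f u • g, g] :=
    LinearIndependent.pair_add_smul_left_iff _ |>.2 hfg
  have hsum : (f + f u • g).smulRight v + g.smulRight u =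
      ∑ i, (![f + f u • g, g] i).smulRight (![v, u] i) := by
    simp [Fin.sum_univ_two]
  rw [fixedCodim_eq_finrank_range, transvection_mul_transvection_sub_one, hsum,
    finrank_range_sum_smulRight hfg' hvu, Fintype.card_fin]

end FixedCodim

section Transvections

variable {K V : Type*} [Field K] [AddCommGroup V] [Module K V] {f g : Dual K V} {u v : V}
  {T : End K V}

lemma transvection_left_injective (hv : v ≠ 0) :
    Function.Injective fun f : Dual K V => transvection f v := fun f g h => by
  ext x
  exact smul_left_injective K hv (add_left_cancel (LinearMap.congr_fun h x))

lemma transvection_right_injective (hf : f ≠ 0) : Function.Injective (transvection f) :=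
    fun v u h => by
  obtain ⟨x, hx⟩ := DFunLike.ne_iff.1 hf
  exact smul_right_injective V hx (add_left_cancel (LinearMap.congr_fun h x))

lemma mem_span_singleton_of_transvection_eq (hf : f ≠ 0)
    (h : transvection f v = transvection g u) : v ∈ K ∙ u := by
  obtain ⟨x, hx⟩ := DFunLike.ne_iff.1 hf
  have hx' : f x • v = g x • u := add_left_cancel (LinearMap.congr_fun h x)
  rw [← inv_smul_smul₀ hx v, hx']
  exact Submodule.smul_mem _ _ (Submodule.smul_mem _ _ (Submodule.mem_span_singleton_self u))

lemma transvection_smul_left (a : K) (f : Dual K V) (v : V) :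
    transvection (a • f) v = transvection f (a • v) := by
  ext x
  simp [transvection.apply, mul_smul, smul_comm a]

variable (K V) in
/-- The transvections of `V` in the group-theoretic sense: unlike `LinearEquiv.transvections`, this
set excludes the identity. -/
def nontrivialTransvections : Set (End K V) :=
  {T | ∃ f : Dual K V, f ≠ 0 ∧ ∃ v ≠ 0, f v = 0 ∧ transvection f v = T}

/-- For `v ≠ 0`, the transvections with center `v`, i.e. those for which `T - 1` has range
`K ∙ v`. -/
def transvectionsWithCenter (v : V) : Set (End K V) :=
  (fun f => transvection f v) '' ((ker (Dual.eval K V v) : Set (Dual K V)) \ {0})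

/-- For `f ≠ 0`, the transvections with axis `ker f`, i.e. those with fixed space `ker f`. -/
def transvectionsWithAxis (f : Dual K V) : Set (End K V) :=
  transvection f '' ((ker f : Set V) \ {0})

lemma transvectionsWithCenter_subset (hv : v ≠ 0) :
    transvectionsWithCenter v ⊆ nontrivialTransvections K V := by
  rintro _ ⟨f, ⟨hfv, hf⟩, rfl⟩
  exact ⟨f, hf, v, hv, hfv, rfl⟩

lemma transvectionsWithAxis_subset (hf : f ≠ 0) :
    transvectionsWithAxis f ⊆ nontrivialTransvections K V := by
  rintro _ ⟨v, ⟨hfv, hv⟩, rfl⟩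
  exact ⟨f, hf, v, hv, hfv, rfl⟩

lemma transvection_mem_transvectionsWithCenter_iff (hf : f ≠ 0) (hv : v ≠ 0) (hfv : f v = 0) :
    transvection f v ∈ transvectionsWithCenter u ↔ v ∈ K ∙ u := by
  refine ⟨?_, fun h => ?_⟩
  · rintro ⟨g, -, h⟩
    exact mem_span_singleton_of_transvection_eq hf h.symm
  · obtain ⟨a, rfl⟩ := Submodule.mem_span_singleton.1 h
    have ha : a ≠ 0 := (smul_ne_zero_iff.1 hv).1
    refine ⟨a • f, ⟨?_, smul_ne_zero ha hf⟩, transvection_smul_left a f u⟩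
    simpa using hfv

lemma transvectionsWithCenter_inter_transvectionsWithAxis (hf : f ≠ 0) (hfv : f v = 0) :
    transvectionsWithCenter v ∩ transvectionsWithAxis f =
      transvection f '' (((K ∙ v : Submodule K V) : Set V) \ {0}) := by
  have hspan : K ∙ v ≤ ker f := (Submodule.span_singleton_le_iff_mem v _).2 hfv
  ext T
  constructor
  · rintro ⟨hcenter, u, ⟨hfu, hu⟩, rfl⟩
    exact ⟨u, ⟨(transvection_mem_transvectionsWithCenter_iff hf hu hfu).1 hcenter, hu⟩, rfl⟩
  · rintro ⟨u, ⟨huv, hu⟩, rfl⟩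
    exact ⟨(transvection_mem_transvectionsWithCenter_iff hf hu (hspan huv)).2 huv,
      u, ⟨hspan huv, hu⟩, rfl⟩

lemma fixedCodim_transvection_mul_le_one (hfv : f v = 0)
    (hT : T ∈ transvectionsWithCenter v ∪ transvectionsWithAxis f) :
    fixedCodim (transvection f v * T) ≤ 1 := by
  rcases hT with ⟨g, -, rfl⟩ | ⟨u, ⟨hfu, -⟩, rfl⟩
  · rw [Module.End.mul_eq_comp, transvection.comp_of_right_eq hfv]
    exact fixedCodim_transvection_le_one _ _
  · rw [Module.End.mul_eq_comp, transvection.comp_of_left_eq hfu]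
    exact fixedCodim_transvection_le_one _ _

lemma fixedCodim_transvection_mul_eq_two (hf : f ≠ 0) (hv : v ≠ 0)
    (hT : T ∈ nontrivialTransvections K V)
    (hT' : T ∉ transvectionsWithCenter v ∪ transvectionsWithAxis f) :
    fixedCodim (transvection f v * T) = 2 := by
  obtain ⟨g, hg, u, hu, hgu, rfl⟩ := hT
  rw [Set.mem_union, not_or] at hT'
  refine fixedCodim_transvection_mul_transvection_eq_two
    ((LinearIndependent.pair_iff' hf).2 fun a ha => hT'.2 ?_)
    ((LinearIndependent.pair_iff' hv).2 fun a ha => hT'.1 ?_)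
  · have ha' : a ≠ 0 := by
      rintro rfl
      exact hg (by simpa using ha.symm)
    rw [← ha, transvection_smul_left]
    refine ⟨a • u, ⟨?_, smul_ne_zero ha' hu⟩, rfl⟩
    simpa [← ha] using hgu
  · exact (transvection_mem_transvectionsWithCenter_iff hg hu hgu).2
      (Submodule.mem_span_singleton.2 ⟨a, ha⟩)

lemma fixedCodim_transvection_mul_eq_zero_iff [Module.Finite K V] (hfv : f v = 0) :
    fixedCodim (transvection f v * T) = 0 ↔ T = transvection f (-v) := by
  have hinv : transvection f v * transvection f (-v) = 1 := by
    rw [Module.End.mul_eq_comp, transvection.comp_of_left_eq (by simp [hfv]), add_neg_cancel,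
      transvection.of_right_eq_zero, Module.End.one_eq_id]
  have hinv' : transvection f (-v) * transvection f v = 1 := by
    rw [Module.End.mul_eq_comp, transvection.comp_of_left_eq hfv, neg_add_cancel,
      transvection.of_right_eq_zero, Module.End.one_eq_id]
  rw [fixedCodim_eq_zero_iff]
  exact ⟨fun h => (left_inv_eq_right_inv hinv' h).symm, fun h => h ▸ hinv⟩

/-- The transvections `T'` such that `T * T'` has fixed space of codimension `e`. -/
def transvectionPartners (T : End K V) (e : ℕ) : Set (End K V) :=
  {T' ∈ nontrivialTransvections K V | fixedCodim (T * T') = e}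

lemma transvectionPartners_zero [Module.Finite K V] (hf : f ≠ 0) (hv : v ≠ 0) (hfv : f v = 0) :
    transvectionPartners (transvection f v) 0 = {transvection f (-v)} := by
  ext T
  rw [transvectionPartners, Set.mem_sep_iff, fixedCodim_transvection_mul_eq_zero_iff hfv,
    Set.mem_singleton_iff, and_iff_right_iff_imp]
  rintro rfl
  exact ⟨f, hf, -v, neg_ne_zero.2 hv, by simp [hfv], rfl⟩

lemma ncard_transvectionPartners_zero [Module.Finite K V]
    (hT : T ∈ nontrivialTransvections K V) :
    (transvectionPartners T 0).ncard = 1 := by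
  obtain ⟨f, hf, v, hv, hfv, rfl⟩ := hT
  rw [transvectionPartners_zero hf hv hfv, Set.ncard_singleton]

lemma transvectionPartners_one [Module.Finite K V] (hf : f ≠ 0) (hv : v ≠ 0) (hfv : f v = 0) :
    transvectionPartners (transvection f v) 1 =
      (transvectionsWithCenter v ∪ transvectionsWithAxis f) \ {transvection f (-v)} := by
  have hsub := Set.union_subset (transvectionsWithCenter_subset hv)
    (transvectionsWithAxis_subset hf)
  ext T
  rw [transvectionPartners, Set.mem_sep_iff, Set.mem_sdiff, Set.mem_singleton_iff,
    ← fixedCodim_transvection_mul_eq_zero_iff hfv]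
  constructor
  · rintro ⟨hT, hone⟩
    refine ⟨by_contra fun h => ?_, by lia⟩
    have := fixedCodim_transvection_mul_eq_two hf hv hT h
    lia
  · rintro ⟨hT, hzero⟩
    have := fixedCodim_transvection_mul_le_one hfv hT
    exact ⟨hsub hT, by lia⟩

lemma transvectionPartners_two (hf : f ≠ 0) (hv : v ≠ 0) (hfv : f v = 0) :
    transvectionPartners (transvection f v) 2 = nontrivialTransvections K V \
      (transvectionsWithCenter v ∪ transvectionsWithAxis f) := by
  ext T
  refine ⟨fun ⟨hT, htwo⟩ => ⟨hT, fun h => ?_⟩,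
    fun ⟨hT, h⟩ => ⟨hT, fixedCodim_transvection_mul_eq_two hf hv hT h⟩⟩
  have := fixedCodim_transvection_mul_le_one hfv h
  lia

end Transvections

section Counting

variable {K V : Type*} [Field K] [Finite K] [AddCommGroup V] [Module K V] [Module.Finite K V]
  {f : Dual K V} {v : V} {T : End K V}

lemma ncard_transvectionsWithCenter_add_one (hv : v ≠ 0) :
    (transvectionsWithCenter (K := K) v).ncard + 1 = Nat.card K ^ (finrank K V - 1) := by
  have heval : Dual.eval K V v ≠ 0 := mt (Module.eval_apply_eq_zero_iff K v).1 hv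
  rw [transvectionsWithCenter, Set.ncard_image_of_injective _ (transvection_left_injective hv),
    ncard_ker_sdiff_zero_add_one heval, Subspace.dual_finrank_eq]

lemma ncard_transvectionsWithAxis_add_one (hf : f ≠ 0) :
    (transvectionsWithAxis f).ncard + 1 = Nat.card K ^ (finrank K V - 1) := by
  rw [transvectionsWithAxis, Set.ncard_image_of_injective _ (transvection_right_injective hf),
    ncard_ker_sdiff_zero_add_one hf]

lemma ncard_transvectionsWithCenter_union_transvectionsWithAxis
    (hf : f ≠ 0) (hv : v ≠ 0) (hfv : f v = 0) :
    (transvectionsWithCenter v ∪ transvectionsWithAxis f).ncard + Nat.card K + 1 =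
      2 * Nat.card K ^ (finrank K V - 1) := by
  have : Finite (End K V) := Module.finite_of_finite K
  have hcenter := ncard_transvectionsWithCenter_add_one (K := K) hv
  have haxis := ncard_transvectionsWithAxis_add_one hf
  have hinter : (transvectionsWithCenter v ∩ transvectionsWithAxis f).ncard + 1 = Nat.card K := by
    rw [transvectionsWithCenter_inter_transvectionsWithAxis hf hfv,
      Set.ncard_image_of_injective _ (transvection_right_injective hf),
      ncard_span_singleton_sdiff_zero_add_one hv]
  have := Set.ncard_union_add_ncard_inter (transvectionsWithCenter v) (transvectionsWithAxis f)
  lia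

lemma ncard_nontrivialTransvections_mul :
    (nontrivialTransvections K V).ncard * (Nat.card K - 1) =
      (Nat.card K ^ finrank K V - 1) * (Nat.card K ^ (finrank K V - 1) - 1) := by
  have : Finite V := Module.finite_of_finite K
  have : Finite (End K V) := Module.finite_of_finite K
  have hvectors : ({v | v ≠ 0} : Set V).ncard = Nat.card K ^ finrank K V - 1 := by
    have := Set.ncard_add_ncard_compl {(0 : V)}
    rw [Set.ncard_singleton, Module.natCard_eq_pow_finrank (K := K)] at this
    exact Nat.eq_sub_of_add_eq' this
  rw [← hvectors]
  refine ncard_mul_eq_ncard_mul (r := fun T v => T ∈ transvectionsWithCenter v) ?_ fun v hv => ?_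
  · rintro _ ⟨f, hf, v, hv, hfv, rfl⟩
    have hcenters : {u ∈ {u : V | u ≠ 0} | transvection f v ∈ transvectionsWithCenter u} =
        ((K ∙ v : Submodule K V) : Set V) \ {0} := by
      ext u
      rw [Set.mem_sep_iff, transvection_mem_transvectionsWithCenter_iff hf hv hfv]
      exact ⟨fun ⟨hu, h⟩ => ⟨mem_span_singleton_symm hv h, hu⟩,
        fun ⟨h, hu⟩ => ⟨hu, mem_span_singleton_symm hu h⟩⟩
    rw [hcenters, ← ncard_span_singleton_sdiff_zero_add_one (K := K) hv, Nat.add_sub_cancel]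
  · rw [Set.sep_mem_eq, Set.inter_eq_right.2 (transvectionsWithCenter_subset hv),
      ← ncard_transvectionsWithCenter_add_one hv, Nat.add_sub_cancel]

lemma ncard_transvectionPartners_one_add (hT : T ∈ nontrivialTransvections K V) :
    (transvectionPartners T 1).ncard + Nat.card K + 2 = 2 * Nat.card K ^ (finrank K V - 1) := by
  obtain ⟨f, hf, v, hv, hfv, rfl⟩ := hT
  have : Finite (End K V) := Module.finite_of_finite K
  have hinv : transvection f (-v) ∈ transvectionsWithCenter v ∪ transvectionsWithAxis f :=
    .inr ⟨-v, ⟨by simp [hfv], neg_ne_zero.2 hv⟩, rfl⟩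
  rw [transvectionPartners_one hf hv hfv,
    ← ncard_transvectionsWithCenter_union_transvectionsWithAxis hf hv hfv,
    ← Set.ncard_sdiff_singleton_add_one hinv]
  lia

lemma ncard_transvectionPartners_two_add (hT : T ∈ nontrivialTransvections K V) :
    (transvectionPartners T 2).ncard + 2 * Nat.card K ^ (finrank K V - 1) =
      (nontrivialTransvections K V).ncard + Nat.card K + 1 := by
  obtain ⟨f, hf, v, hv, hfv, rfl⟩ := hT
  have : Finite (End K V) := Module.finite_of_finite K
  have hsub := Set.union_subset (transvectionsWithCenter_subset hv)
    (transvectionsWithAxis_subset hf)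
  have := Set.ncard_sdiff_add_ncard_of_subset hsub
  have := ncard_transvectionsWithCenter_union_transvectionsWithAxis hf hv hfv
  rw [transvectionPartners_two hf hv hfv]
  lia

variable (K V) in
/-- The ordered pairs of transvections of `V` whose product has fixed space of codimension `e`. -/
def transvectionPairs (e : ℕ) : Set (End K V × End K V) :=
  {p | p.1 ∈ nontrivialTransvections K V ∧ p.2 ∈ transvectionPartners p.1 e}

lemma cast_ncard_nontrivialTransvections_mul :
    ((nontrivialTransvections K V).ncard : ℝ) * (Nat.card K - 1) =
      ((Nat.card K : ℝ) ^ finrank K V - 1) * ((Nat.card K : ℝ) ^ (finrank K V - 1) - 1) := by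
  have := congr_arg (Nat.cast (R := ℝ)) (ncard_nontrivialTransvections_mul (K := K) (V := V))
  simpa [Nat.cast_pred, Nat.card_pos, pow_pos] using this

lemma ncard_transvectionPairs_div_sq {e : ℕ} {c : ℝ} (hV : 2 ≤ finrank K V)
    (hc : ∀ T ∈ nontrivialTransvections K V, ((transvectionPartners T e).ncard : ℝ) = c) :
    ((transvectionPairs K V e).ncard : ℝ) / ((nontrivialTransvections K V).ncard : ℝ) ^ 2 =
      c * (Nat.card K - 1) /
        (((Nat.card K : ℝ) ^ finrank K V - 1) * ((Nat.card K : ℝ) ^ (finrank K V - 1) - 1)) := by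
  have : Finite (End K V) := Module.finite_of_finite K
  have hq : 1 < (Nat.card K : ℝ) := by exact_mod_cast Finite.one_lt_card
  have hpow {m : ℕ} (hm : m ≠ 0) : (Nat.card K : ℝ) ^ m - 1 ≠ 0 :=
    (sub_pos.2 (one_lt_pow₀ hq hm)).ne'
  have hcount := cast_ncard_nontrivialTransvections_mul (K := K) (V := V)
  have hN : ((nontrivialTransvections K V).ncard : ℝ) ≠ 0 := by
    refine left_ne_zero_of_mul (b := (Nat.card K : ℝ) - 1) ?_
    rw [hcount]
    exact mul_ne_zero (hpow (by lia)) (hpow (by lia))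
  obtain ⟨T, hT⟩ := Set.nonempty_of_ncard_ne_zero (Nat.cast_ne_zero.1 hN)
  have hpairs : (transvectionPairs K V e).ncard =
      (nontrivialTransvections K V).ncard * (transvectionPartners T e).ncard :=
    ncard_setOf_fst_mem_and_snd_mem fun T' hT' =>
      Nat.cast_injective ((hc T' hT').trans (hc T hT).symm)
  rw [hpairs, Nat.cast_mul, hc T hT, ← hcount]
  field_simp [(sub_pos.2 hq).ne']

end Counting

section Matrix

variable {F : Type*} [Field F] {m : ℕ}

lemma toLin'_mem_nontrivialTransvections_iff {T : Matrix (Fin m) (Fin m) F} :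
    Matrix.toLin' T ∈ nontrivialTransvections F (Fin m → F) ↔ IsGLTransvection T := by
  constructor
  · rintro ⟨f, hf, v, hv, hfv, h⟩
    exact ⟨v, hv, f, hf, hfv, fun y => by rw [← Matrix.toLin'_apply, ← h, transvection.apply]⟩
  · rintro ⟨v, hv, f, hf, hfv, h⟩
    exact ⟨f, hf, v, hv, hfv, LinearMap.ext fun y => by
      rw [Matrix.toLin'_apply, h, transvection.apply]⟩

lemma fixedCodim_toLin'_eq_iff {T : Matrix (Fin m) (Fin m) F} {e : ℕ} (he : e ≤ m) :
    fixedCodim (Matrix.toLin' T) = e ↔ finrank F (ker (Matrix.toLin' (T - 1))) = m - e := by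
  have := Submodule.finrank_quotient_add_finrank (Matrix.toLin' T).fixedSubmodule
  rw [finrank_fin_fun] at this
  rw [map_sub, Matrix.toLin'_one, ← fixedSubmodule_eq_ker, fixedCodim]
  lia

variable [Fintype F]

lemma glTransvCount_eq_ncard :
    glTransvCount F m = (nontrivialTransvections F (Fin m → F)).ncard := by
  rw [← Nat.card_coe_set_eq]
  exact Nat.card_congr (Matrix.toLin'.toEquiv.subtypeEquiv fun _ =>
    toLin'_mem_nontrivialTransvections_iff.symm)

lemma glTransvPairCount_eq_ncard {e : ℕ} (he : e ≤ m) :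
    glTransvPairCount F m e = (transvectionPairs F (Fin m → F) e).ncard := by
  rw [← Nat.card_coe_set_eq]
  refine Nat.card_congr ((Matrix.toLin'.toEquiv.prodCongr Matrix.toLin'.toEquiv).subtypeEquiv
    fun ⟨T, T'⟩ => ?_)
  exact and_congr toLin'_mem_nontrivialTransvections_iff.symm
    (and_congr toLin'_mem_nontrivialTransvections_iff.symm
      (by rw [← fixedCodim_toLin'_eq_iff he, Matrix.toLin'_mul]; rfl))

end Matrix

theorem gl_transvection_product_probabilities_general {K V : Type*} [Field K] [Finite K]
    [AddCommGroup V] [Module K V] {q n : ℕ} (hq : Nat.card K = q) (hV : finrank K V = n)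
    (hn : 2 ≤ n) :
    ((transvectionPairs K V 2).ncard : ℝ) / ((nontrivialTransvections K V).ncard : ℝ) ^ 2 =
      ((q : ℝ) ^ (2 * n - 1) - 3 * (q : ℝ) ^ n + (q : ℝ) ^ (n - 1) + (q : ℝ) ^ 2) /
        (((q : ℝ) ^ n - 1) * ((q : ℝ) ^ (n - 1) - 1)) ∧
    ((transvectionPairs K V 1).ncard : ℝ) / ((nontrivialTransvections K V).ncard : ℝ) ^ 2 =
      (2 * (q : ℝ) ^ n - 2 * (q : ℝ) ^ (n - 1) - (q : ℝ) ^ 2 - (q : ℝ) + 2) /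
        (((q : ℝ) ^ n - 1) * ((q : ℝ) ^ (n - 1) - 1)) ∧
    ((transvectionPairs K V 0).ncard : ℝ) / ((nontrivialTransvections K V).ncard : ℝ) ^ 2 =
      ((q : ℝ) - 1) / (((q : ℝ) ^ n - 1) * ((q : ℝ) ^ (n - 1) - 1)) := by
  have : Module.Finite K V := Module.finite_of_finrank_pos (by lia)
  obtain ⟨k, rfl⟩ : ∃ k, n = k + 1 := ⟨n - 1, by lia⟩
  have hcount := cast_ncard_nontrivialTransvections_mul (K := K) (V := V)
  have hexp : 2 * (k + 1) - 1 = 2 * k + 1 := by lia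
  rw [hq, hV, Nat.add_sub_cancel] at hcount
  have htwo (T) (hT : T ∈ nontrivialTransvections K V) :
      ((transvectionPartners T 2).ncard : ℝ) =
        (nontrivialTransvections K V).ncard + q + 1 - 2 * (q : ℝ) ^ k := by
    have := ncard_transvectionPartners_two_add hT
    rw [hq, hV, Nat.add_sub_cancel] at this
    exact eq_sub_of_add_eq (by exact_mod_cast this)
  have hone (T) (hT : T ∈ nontrivialTransvections K V) :
      ((transvectionPartners T 1).ncard : ℝ) = 2 * (q : ℝ) ^ k - (q + 2) := by
    have := ncard_transvectionPartners_one_add hT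
    rw [hq, hV, Nat.add_sub_cancel, add_assoc] at this
    exact eq_sub_of_add_eq (by exact_mod_cast this)
  have hzero (T) (hT : T ∈ nontrivialTransvections K V) :
      ((transvectionPartners T 0).ncard : ℝ) = 1 := by
    rw [ncard_transvectionPartners_zero hT, Nat.cast_one]
  rw [ncard_transvectionPairs_div_sq (hV ▸ hn) htwo, ncard_transvectionPairs_div_sq (hV ▸ hn) hone,
    ncard_transvectionPairs_div_sq (hV ▸ hn) hzero, hq, hV, hexp, Nat.add_sub_cancel]
  refine ⟨congr_arg (· / _) ?_, congr_arg (· / _) ?_, congr_arg (· / _) (one_mul _)⟩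
  · linear_combination hcount
  · ring

/-- **Theorem (product of two transvections in `GL_n(q)`).**  Let `F` be a finite field
with `q` elements and `V = F^n`, `n ≥ 2`.  The probability that the product of two
independent uniformly random transvections of `GL(V)` has fixed point subspace of
codimension `e` equals `(q^{2n−1} − 3q^n + q^{n−1} + q²)/((q^n−1)(q^{n−1}−1))` if `e = 2`,
`(2q^n − 2q^{n−1} − q² − q + 2)/((q^n−1)(q^{n−1}−1))` if `e = 1`, and
`(q−1)/((q^n−1)(q^{n−1}−1))` if `e = 0`. -/
theorem gl_transvection_product_probabilities {F : Type*} [Field F] [Fintype F]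
    {q n : ℕ} (hq : Fintype.card F = q) (hn : 2 ≤ n) :
    (glTransvPairCount F n 2 : ℝ) / (glTransvCount F n : ℝ) ^ 2 =
      ((q : ℝ) ^ (2 * n - 1) - 3 * (q : ℝ) ^ n + (q : ℝ) ^ (n - 1) + (q : ℝ) ^ 2) /
        (((q : ℝ) ^ n - 1) * ((q : ℝ) ^ (n - 1) - 1)) ∧
    (glTransvPairCount F n 1 : ℝ) / (glTransvCount F n : ℝ) ^ 2 =
      (2 * (q : ℝ) ^ n - 2 * (q : ℝ) ^ (n - 1) - (q : ℝ) ^ 2 - (q : ℝ) + 2) /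
        (((q : ℝ) ^ n - 1) * ((q : ℝ) ^ (n - 1) - 1)) ∧
    (glTransvPairCount F n 0 : ℝ) / (glTransvCount F n : ℝ) ^ 2 =
      ((q : ℝ) - 1) / (((q : ℝ) ^ n - 1) * ((q : ℝ) ^ (n - 1) - 1)) := by
  rw [glTransvPairCount_eq_ncard hn, glTransvPairCount_eq_ncard (one_le_two.trans hn),
    glTransvPairCount_eq_ncard n.zero_le, glTransvCount_eq_ncard]
  exact gl_transvection_product_probabilities_general (Nat.card_eq_fintype_card.trans hq)
    (finrank_fin_fun F) hn
end
end

section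
/- Let F be a finite field with q elements, q odd, and let E be its quadratic extension with q² elements. Let S = {α ∈ F^× : α is a square in F^× and α ≠ 4}. (i) If q ≡ 1 (mod 4), then there are exactly (q−5)/4 elements α ∈ S for which there exists λ ∈ F^× with 2 − α = λ + λ^{−1}, and for every such α and λ, λ is a nonzero square in F; and there are exactly (q−1)/4 elements α ∈ S for which there exists λ ∈ E^× with λ^{q+1} = 1 and 2 − α = λ + λ^{−1}, and for every such α and λ one has λ^{(q+1)/2} = −1. (ii) If q ≡ 3 (mod 4), then there are exactly (q−3)/4 elements α ∈ S for which there exists λ ∈ F^× with λ ≠ ±1 and 2 − α = λ + λ^{−1}, and every such λ is a nonsquare in F^×; and there are exactly (q−3)/4 elements α ∈ S for which there exists λ ∈ E^× with λ^{q+1} = 1, λ ≠ ±1, and 2 − α = λ + λ^{−1}, and every such λ satisfies λ^{(q+1)/2} = 1. -/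
/-!
Put `μ = -λ`, so that `2 - α = λ + λ⁻¹` reads `α * μ = (λ - 1) ^ 2`. If `λ ^ n = 1` with
`n = q - 1` or `n = q + 1`, then `λ ^ q` is `λ` or `λ⁻¹`, and raising this identity to the power
`(q - 1) / 2` gives `α ^ ((q - 1) / 2) * μ ^ (n / 2) = 1`. By Euler's criterion `α` is therefore a
square exactly when `μ ^ (n / 2) = 1`. Hence the `α` to be counted correspond to the pairs
`{μ, μ⁻¹}` of `n / 2`-th roots of unity other than `±1`.
-/

section TraceEquation

theorem add_inv_eq_add_inv_iff {K : Type*} [Field K] {x y : K} (hx : x ≠ 0) (hy : y ≠ 0) :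
    x + x⁻¹ = y + y⁻¹ ↔ x = y ∨ x = y⁻¹ := by
  have hfactor : x + x⁻¹ - (y + y⁻¹) = (x - y) * (x * y - 1) / (x * y) := by
    field_simp
    ring
  rw [← sub_eq_zero, hfactor, div_eq_zero_iff, or_iff_left (mul_ne_zero hx hy), mul_eq_zero,
    sub_eq_zero, sub_eq_zero, mul_eq_one_iff_eq_inv₀ hy]

variable {F K : Type*} [Field F] [Field K] [Algebra F K] {a : F} {l : K}

theorem algebraMap_mul_neg_eq_sub_one_sq (hl : l ≠ 0)
    (h : algebraMap F K (2 - a) = l + l⁻¹) : algebraMap F K a * -l = (l - 1) ^ 2 := by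
  rw [map_sub, map_ofNat] at h
  linear_combination l * h + mul_inv_cancel₀ hl

theorem eq_zero_iff_eq_one_of_trace (hl : l ≠ 0) (h : algebraMap F K (2 - a) = l + l⁻¹) :
    a = 0 ↔ l = 1 := by
  rw [← map_eq_zero (algebraMap F K), ← mul_left_inj' (neg_ne_zero.mpr hl), zero_mul,
    algebraMap_mul_neg_eq_sub_one_sq hl h, sq_eq_zero_iff, sub_eq_zero]

theorem eq_four_iff_eq_neg_one_of_trace (hl : l ≠ 0) (h : algebraMap F K (2 - a) = l + l⁻¹) :
    a = 4 ↔ l = -1 := by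
  have hsq : algebraMap F K (a - 4) * -l = (l + 1) ^ 2 := by
    rw [map_sub, map_ofNat]
    linear_combination algebraMap_mul_neg_eq_sub_one_sq hl h
  rw [← sub_eq_zero, ← map_eq_zero (algebraMap F K), ← mul_left_inj' (neg_ne_zero.mpr hl),
    zero_mul, hsq, sq_eq_zero_iff, add_eq_zero_iff_eq_neg]

theorem ne_one_and_ne_neg_one_of_trace (ha0 : a ≠ 0) (ha4 : a ≠ 4) (hl : l ≠ 0)
    (h : algebraMap F K (2 - a) = l + l⁻¹) : l ≠ 1 ∧ l ≠ -1 :=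
  ⟨(eq_zero_iff_eq_one_of_trace hl h).not.mp ha0, (eq_four_iff_eq_neg_one_of_trace hl h).not.mp ha4⟩

end TraceEquation

section RootsOfUnity

open Finset Polynomial

theorem ne_zero_of_pow_eq_one {M : Type*} [MonoidWithZero M] [Nontrivial M] {x : M} {n : ℕ}
    (hn : n ≠ 0) (hx : x ^ n = 1) : x ≠ 0 :=
  ne_zero_pow hn (hx.trans_ne one_ne_zero)

theorem neg_pow_two_mul_eq_one {M : Type*} [Monoid M] [HasDistribNeg M] {x : M} {k : ℕ}
    (hx : x ^ k = 1) : (-x) ^ (2 * k) = 1 := by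
  rw [(even_two_mul k).neg_pow, mul_comm, pow_mul, hx, one_pow]

theorem pow_eq_self_or_inv_of_pow_eq_one {M : Type*} [DivisionMonoid M] {x : M} {q n : ℕ}
    (hn : n + 1 = q ∨ n = q + 1) (hx : x ^ n = 1) : x ^ q = x ∨ x ^ q = x⁻¹ := by
  rcases hn with rfl | rfl
  · exact Or.inl (by rw [pow_succ, hx, one_mul])
  · exact Or.inr (eq_inv_of_mul_eq_one_left (by rwa [pow_succ] at hx))

theorem exists_isPrimitiveRoot_card_sub_one (K : Type*) [Field K] [Fintype K] :
    ∃ ζ : K, IsPrimitiveRoot ζ (Fintype.card K - 1) := by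
  obtain ⟨g, hg⟩ := IsCyclic.exists_ofOrder_eq_natCard (α := Kˣ)
  refine ⟨g, IsPrimitiveRoot.iff_orderOf.mpr ?_⟩
  rw [orderOf_units, hg, Nat.card_units, Nat.card_eq_fintype_card]

theorem exists_isPrimitiveRoot_of_dvd_card_sub_one {K : Type*} [Field K] [Fintype K]
    {n : ℕ} (hn : n ∣ Fintype.card K - 1) : ∃ ζ : K, IsPrimitiveRoot ζ n := by
  obtain ⟨g, hg⟩ := exists_isPrimitiveRoot_card_sub_one K
  obtain ⟨d, hd⟩ := hn
  have hpos : 0 < Fintype.card K - 1 := Nat.sub_pos_of_lt Fintype.one_lt_card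
  exact ⟨g ^ d, hg.pow hpos (hd.trans (mul_comm n d))⟩

open scoped Classical in
/-- The `k`-th roots of unity `μ ≠ ±1`. With `k = (q - 1) / 2` and `k = (q + 1) / 2` these are the
`μ = -λ` for which the solution `α` of `2 - α = λ + λ⁻¹` is a square other than `0` and `4`. -/
noncomputable def nontrivialNthRoots (K : Type*) [Field K] (k : ℕ) : Finset K :=
  {m ∈ nthRootsFinset k (1 : K) | m ≠ 1 ∧ m ≠ -1}

variable {K : Type*} [Field K] {m ζ : K} {k : ℕ}

theorem mem_nontrivialNthRoots (hk : 0 < k) :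
    m ∈ nontrivialNthRoots K k ↔ m ^ k = 1 ∧ m ≠ 1 ∧ m ≠ -1 := by
  classical
  rw [nontrivialNthRoots, mem_filter, mem_nthRootsFinset hk]

theorem card_nontrivialNthRoots_of_odd (h : (-1 : K) ≠ 1) (hζ : IsPrimitiveRoot ζ k)
    (hk : Odd k) : #(nontrivialNthRoots K k) + 1 = k := by
  classical
  have herase : nontrivialNthRoots K k = (nthRootsFinset k (1 : K)).erase 1 := by
    ext m
    have hm : m ^ k = 1 → m ≠ -1 := by
      rintro hm rfl
      exact h (hk.neg_one_pow.symm.trans hm)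
    rw [mem_nontrivialNthRoots hk.pos, mem_erase, mem_nthRootsFinset hk.pos]
    tauto
  rw [herase, card_erase_add_one (one_mem_nthRootsFinset hk.pos), hζ.card_nthRootsFinset]

theorem card_nontrivialNthRoots_of_even (h : (-1 : K) ≠ 1) (hζ : IsPrimitiveRoot ζ k)
    (hk : Even k) (hpos : 0 < k) : #(nontrivialNthRoots K k) + 2 = k := by
  classical
  have herase : nontrivialNthRoots K k = ((nthRootsFinset k (1 : K)).erase 1).erase (-1) := by
    ext m
    rw [mem_nontrivialNthRoots hpos, mem_erase, mem_erase, mem_nthRootsFinset hpos]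
    tauto
  have hneg : -1 ∈ (nthRootsFinset k (1 : K)).erase 1 :=
    mem_erase.mpr ⟨h, (mem_nthRootsFinset hpos _).mpr hk.neg_one_pow⟩
  rw [herase, ← add_assoc _ 1 1, card_erase_add_one hneg,
    card_erase_add_one (one_mem_nthRootsFinset hpos), hζ.card_nthRootsFinset]

end RootsOfUnity

/-- The squares `α ≠ 0, 4` for which `2 - α = λ + λ⁻¹` has a solution `λ` with `λ ^ n = 1`. Here
`n = q - 1` with `K = F` stands for `λ ∈ F^×`, and `n = q + 1` with `K = E` for `λ` of norm one. -/
def squareTraceSet (F K : Type*) [Field F] [Field K] [Algebra F K] (n : ℕ) : Set F :=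
  {a | (IsSquare a ∧ a ≠ 0 ∧ a ≠ 4) ∧ ∃ l : K, l ^ n = 1 ∧ algebraMap F K (2 - a) = l + l⁻¹}

theorem squareTraceSet_eq_setOf_ne_one_ne_neg_one {F K : Type*} [Field F] [Field K]
    [Algebra F K] {n : ℕ} (hn : n ≠ 0) :
    squareTraceSet F K n = {a | (IsSquare a ∧ a ≠ 0 ∧ a ≠ 4) ∧
      ∃ l : K, l ^ n = 1 ∧ l ≠ 1 ∧ l ≠ -1 ∧ algebraMap F K (2 - a) = l + l⁻¹} := by
  ext a
  refine and_congr_right fun ha ↦ exists_congr fun l ↦ and_congr_right fun hl ↦ ?_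
  rw [← and_assoc, iff_and_self]
  exact ne_one_and_ne_neg_one_of_trace ha.2.1 ha.2.2 (ne_zero_of_pow_eq_one hn hl)

section FiniteField

variable {F K : Type*} [Field F] [Fintype F] [Field K] [Algebra F K] {a : F} {l m : K} {n k : ℕ}

open Polynomial in
theorem exists_algebraMap_eq_of_pow_card_eq_self (h : l ^ Fintype.card F = l) :
    ∃ x : F, algebraMap F K x = l := by
  have hsplits : (X ^ Fintype.card F - X : F[X]).Splits := by
    simpa using IsSplittingField.splits F (X ^ Fintype.card F - X : F[X])
  refine hsplits.mem_range_of_isRoot (FiniteField.X_pow_card_sub_X_ne_zero F Fintype.one_lt_card) ?_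
  simp [h]

theorem exists_trace_eq_add_inv (hn : n + 1 = Fintype.card F ∨ n = Fintype.card F + 1)
    (hl : l ^ n = 1) : ∃ a : F, algebraMap F K (2 - a) = l + l⁻¹ := by
  have hfrob : (l + l⁻¹) ^ Fintype.card F = l + l⁻¹ := by
    have hadd : (l + l⁻¹) ^ Fintype.card F = l ^ Fintype.card F + (l ^ Fintype.card F)⁻¹ := by
      simpa using map_add (FiniteField.frobeniusAlgHom F K) l l⁻¹
    rcases pow_eq_self_or_inv_of_pow_eq_one hn hl with h | h
    · rw [hadd, h]
    · rw [hadd, h, inv_inv, add_comm]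
  obtain ⟨t, ht⟩ := exists_algebraMap_eq_of_pow_card_eq_self hfrob
  exact ⟨2 - t, by rw [sub_sub_cancel, ht]⟩

theorem odd_card_and_pos_of_two_mul (hk : 2 * k + 1 = Fintype.card F ∨ 2 * k = Fintype.card F + 1) :
    Odd (Fintype.card F) ∧ 0 < k := by
  have hcard := Fintype.one_lt_card (α := F)
  exact ⟨Nat.odd_iff.mpr (by omega), by omega⟩

theorem ringChar_ne_two_of_odd_card (hodd : Odd (Fintype.card F)) : ringChar F ≠ 2 := fun h ↦
  Nat.not_even_iff_odd.mpr hodd (Nat.even_iff.mpr (FiniteField.even_card_of_char_two h))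

theorem algebraMap_pow_mul_neg_pow_eq_one
    (hk : 2 * k + 1 = Fintype.card F ∨ 2 * k = Fintype.card F + 1) (hl : l ^ (2 * k) = 1)
    (hl0 : l ≠ 0) (hl1 : l ≠ 1) (h : algebraMap F K (2 - a) = l + l⁻¹) :
    algebraMap F K a ^ (Fintype.card F / 2) * (-l) ^ k = 1 := by
  obtain ⟨r, hr⟩ := (odd_card_and_pos_of_two_mul hk).1
  have hprod : algebraMap F K a ^ r * (-l) ^ r = (l - 1) ^ (2 * r) := by
    rw [← mul_pow, algebraMap_mul_neg_eq_sub_one_sq hl0 h, pow_mul]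
  have hfrob : (l - 1) ^ (2 * r) * (l - 1) = l ^ Fintype.card F - 1 := by
    rw [← pow_succ, ← hr]
    simpa using map_sub (FiniteField.frobeniusAlgHom F K) l 1
  apply mul_right_cancel₀ (sub_ne_zero.mpr hl1)
  rw [show Fintype.card F / 2 = r by omega]
  rcases hk with hk | hk
  · obtain rfl : k = r := by omega
    rw [hprod, hfrob, ← hk, pow_succ, hl, one_mul, one_mul]
  · obtain rfl : k = r + 1 := by omega
    rw [hk, pow_succ] at hl
    rw [pow_succ, ← mul_assoc, hprod]
    linear_combination -l * hfrob - hl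

theorem isSquare_iff_neg_pow_eq_one
    (hk : 2 * k + 1 = Fintype.card F ∨ 2 * k = Fintype.card F + 1) (hl : l ^ (2 * k) = 1)
    (ha : a ≠ 0) (h : algebraMap F K (2 - a) = l + l⁻¹) : IsSquare a ↔ (-l) ^ k = 1 := by
  obtain ⟨hodd, hpos⟩ := odd_card_and_pos_of_two_mul hk
  have hl0 : l ≠ 0 := ne_zero_of_pow_eq_one (by positivity) hl
  have hl1 : l ≠ 1 := (eq_zero_iff_eq_one_of_trace hl0 h).not.mp ha
  rw [FiniteField.isSquare_iff (ringChar_ne_two_of_odd_card hodd) ha,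
    ← map_eq_one_iff _ (algebraMap F K).injective, map_pow,
    eq_one_iff_eq_one_of_mul_eq_one (algebraMap_pow_mul_neg_pow_eq_one hk hl hl0 hl1 h)]

theorem pow_eq_neg_one_pow_of_isSquare
    (hk : 2 * k + 1 = Fintype.card F ∨ 2 * k = Fintype.card F + 1) (hl : l ^ (2 * k) = 1)
    (hsq : IsSquare a) (ha : a ≠ 0) (h : algebraMap F K (2 - a) = l + l⁻¹) :
    l ^ k = (-1) ^ k := by
  rw [← neg_neg l, neg_pow, (isSquare_iff_neg_pow_eq_one hk hl ha h).mp hsq, mul_one]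

theorem pow_card_add_one_half_eq_neg_one_pow_of_isSquare (hodd : Odd (Fintype.card F))
    (hl : l ^ (Fintype.card F + 1) = 1) (hsq : IsSquare a) (ha : a ≠ 0)
    (h : algebraMap F K (2 - a) = l + l⁻¹) :
    l ^ ((Fintype.card F + 1) / 2) = (-1) ^ ((Fintype.card F + 1) / 2) := by
  have hcard := Nat.two_mul_div_two_of_even hodd.add_one
  exact pow_eq_neg_one_pow_of_isSquare (.inr hcard) (by rw [hcard, hl]) hsq ha h

theorem isSquare_iff_even_card_half_of_trace {l : F} (hodd : Odd (Fintype.card F)) (hl : l ≠ 0)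
    (hsq : IsSquare a) (ha : a ≠ 0) (h : 2 - a = l + l⁻¹) :
    IsSquare l ↔ Even (Fintype.card F / 2) := by
  have hchar := ringChar_ne_two_of_odd_card hodd
  have hcard := Nat.two_mul_div_two_add_one_of_odd hodd
  have hpow : l ^ (2 * (Fintype.card F / 2)) = 1 := by
    rw [Nat.eq_sub_of_add_eq hcard, FiniteField.pow_card_sub_one_eq_one l hl]
  rw [FiniteField.isSquare_iff hchar hl, pow_eq_neg_one_pow_of_isSquare (.inl hcard) hpow hsq ha h,
    neg_one_pow_eq_one_iff_even (Ring.neg_one_ne_one_of_char_ne_two hchar)]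

theorem squareTraceSet_self :
    squareTraceSet F F (Fintype.card F - 1) =
      {a | (IsSquare a ∧ a ≠ 0 ∧ a ≠ 4) ∧ ∃ l : F, l ≠ 0 ∧ 2 - a = l + l⁻¹} := by
  ext a
  refine and_congr_right fun _ ↦ exists_congr fun l ↦ and_congr_left fun _ ↦ ?_
  exact ⟨ne_zero_of_pow_eq_one (Nat.sub_ne_zero_of_lt Fintype.one_lt_card),
    FiniteField.pow_card_sub_one_eq_one l⟩

theorem squareTraceSet_self_eq_setOf_ne_one_ne_neg_one :
    squareTraceSet F F (Fintype.card F - 1) = {a | (IsSquare a ∧ a ≠ 0 ∧ a ≠ 4) ∧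
      ∃ l : F, l ≠ 1 ∧ l ≠ -1 ∧ l ≠ 0 ∧ 2 - a = l + l⁻¹} := by
  rw [squareTraceSet_self]
  ext a
  refine and_congr_right fun ha ↦ exists_congr fun l ↦ ?_
  rw [← and_assoc (a := l ≠ 1), iff_and_self]
  exact fun h ↦ ne_one_and_ne_neg_one_of_trace (K := F) ha.2.1 ha.2.2 h.1 h.2

theorem mem_squareTraceSet_iff_mem_nontrivialNthRoots
    (hk : 2 * k + 1 = Fintype.card F ∨ 2 * k = Fintype.card F + 1) (hm : m ≠ 0)
    (h : algebraMap F K (2 - a) = -m + (-m)⁻¹) :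
    a ∈ squareTraceSet F K (2 * k) ↔ m ∈ nontrivialNthRoots K k := by
  have hpos := (odd_card_and_pos_of_two_mul hk).2
  have hzero : a ≠ 0 ↔ m ≠ -1 := by
    rw [Ne, eq_zero_iff_eq_one_of_trace (neg_ne_zero.mpr hm) h, neg_eq_iff_eq_neg]
  have hfour : a ≠ 4 ↔ m ≠ 1 := by
    rw [Ne, eq_four_iff_eq_neg_one_of_trace (neg_ne_zero.mpr hm) h, neg_inj]
  have hsquare (hpow : (-m) ^ (2 * k) = 1) (ha : a ≠ 0) : IsSquare a ↔ m ^ k = 1 := by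
    rw [isSquare_iff_neg_pow_eq_one hk hpow ha h, neg_neg]
  rw [mem_nontrivialNthRoots hpos]
  constructor
  · rintro ⟨⟨hsq, ha0, ha4⟩, l, hl, hla⟩
    have hl0 : l ≠ 0 := ne_zero_of_pow_eq_one (by positivity) hl
    have hpow : (-m) ^ (2 * k) = 1 := by
      rcases (add_inv_eq_add_inv_iff (neg_ne_zero.mpr hm) hl0).mp (h.symm.trans hla) with hml | hml
      · rw [hml, hl]
      · rw [hml, inv_pow, hl, inv_one]
    exact ⟨(hsquare hpow ha0).mp hsq, hfour.mp ha4, hzero.mp ha0⟩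
  · rintro ⟨hmk, hm1, hm1'⟩
    have hpow := neg_pow_two_mul_eq_one hmk
    have ha0 := hzero.mpr hm1'
    exact ⟨⟨(hsquare hpow ha0).mpr hmk, ha0, hfour.mpr hm1⟩, -m, hpow, h⟩

theorem existsUnique_mem_squareTraceSet
    (hk : 2 * k + 1 = Fintype.card F ∨ 2 * k = Fintype.card F + 1)
    (hm : m ∈ nontrivialNthRoots K k) :
    ∃! a, a ∈ squareTraceSet F K (2 * k) ∧ algebraMap F K (2 - a) = -m + (-m)⁻¹ := by
  have hpos := (odd_card_and_pos_of_two_mul hk).2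
  have hmk : m ^ k = 1 := ((mem_nontrivialNthRoots hpos).mp hm).1
  have hm0 : m ≠ 0 := ne_zero_of_pow_eq_one hpos.ne' hmk
  obtain ⟨a, ha⟩ := exists_trace_eq_add_inv hk (neg_pow_two_mul_eq_one hmk)
  refine ⟨a, ⟨(mem_squareTraceSet_iff_mem_nontrivialNthRoots hk hm0 ha).mpr hm, ha⟩, ?_⟩
  rintro b ⟨-, hb⟩
  exact sub_right_injective ((algebraMap F K).injective (hb.trans ha.symm))

open scoped Classical in
theorem exists_filter_nontrivialNthRoots_eq_pair
    (hk : 2 * k + 1 = Fintype.card F ∨ 2 * k = Fintype.card F + 1)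
    (ha : a ∈ squareTraceSet F K (2 * k)) :
    ∃ m, m ≠ m⁻¹ ∧
      {x ∈ nontrivialNthRoots K k | algebraMap F K (2 - a) = -x + (-x)⁻¹} = {m, m⁻¹} := by
  have hpos := (odd_card_and_pos_of_two_mul hk).2
  have hmem {x : K} := mem_squareTraceSet_iff_mem_nontrivialNthRoots (a := a) (m := x) hk
  obtain ⟨m, hm0, hma⟩ : ∃ m : K, m ≠ 0 ∧ algebraMap F K (2 - a) = -m + (-m)⁻¹ := by
    obtain ⟨-, l, hl, hla⟩ := ha
    have hl0 : l ≠ 0 := ne_zero_of_pow_eq_one (by positivity) hl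
    exact ⟨-l, neg_ne_zero.mpr hl0, by rw [neg_neg, hla]⟩
  have htrace {x : K} (hx : x ≠ 0) :
      algebraMap F K (2 - a) = -x + (-x)⁻¹ ↔ x = m ∨ x = m⁻¹ := by
    rw [hma, eq_comm, add_inv_eq_add_inv_iff (neg_ne_zero.mpr hx) (neg_ne_zero.mpr hm0), inv_neg,
      neg_inj, neg_inj]
  obtain ⟨-, hm1, hm1'⟩ := (mem_nontrivialNthRoots hpos).mp ((hmem hm0 hma).mp ha)
  refine ⟨m, by rw [Ne, self_eq_inv₀]; tauto, ?_⟩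
  ext x
  rw [Finset.mem_filter, Finset.mem_insert, Finset.mem_singleton]
  constructor
  · rintro ⟨hx, hxa⟩
    exact (htrace (ne_zero_of_pow_eq_one hpos.ne' ((mem_nontrivialNthRoots hpos).mp hx).1)).mp hxa
  · intro hx
    have hx0 : x ≠ 0 := by rcases hx with rfl | rfl <;> simp [hm0]
    have hxa := (htrace hx0).mpr hx
    exact ⟨(hmem hx0 hxa).mp ha, hxa⟩

open Finset in
theorem card_nontrivialNthRoots_eq_two_mul_natCard_squareTraceSet
    (hk : 2 * k + 1 = Fintype.card F ∨ 2 * k = Fintype.card F + 1) :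
    #(nontrivialNthRoots K k) = 2 * Nat.card (squareTraceSet F K (2 * k)) := by
  classical
  rw [Nat.card_eq_card_toFinset, mul_comm, ← card_mul_eq_card_mul (m := 1) (n := 2)
    (fun (m : K) (a : F) ↦ algebraMap F K (2 - a) = -m + (-m)⁻¹), mul_one]
  · intro m hm
    obtain ⟨a, ha, hunique⟩ := existsUnique_mem_squareTraceSet hk hm
    refine card_eq_one.mpr ⟨a, eq_singleton_iff_unique_mem.mpr ?_⟩
    simpa only [mem_bipartiteAbove, Set.mem_toFinset] using ⟨ha, hunique⟩
  · intro a ha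
    obtain ⟨m, hne, hpair⟩ :=
      exists_filter_nontrivialNthRoots_eq_pair hk (Set.mem_toFinset.mp ha)
    rw [bipartiteBelow, hpair, card_pair hne]

theorem neg_one_ne_one_of_odd_card (K : Type*) [Field K] [Algebra F K]
    (hodd : Odd (Fintype.card F)) : (-1 : K) ≠ 1 :=
  Ring.neg_one_ne_one_of_char_ne_two (Algebra.ringChar_eq F K ▸ ringChar_ne_two_of_odd_card hodd)

variable {ζ : K}

theorem natCard_squareTraceSet_of_odd
    (hk : 2 * k + 1 = Fintype.card F ∨ 2 * k = Fintype.card F + 1)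
    (hζ : IsPrimitiveRoot ζ (2 * k)) (hodd : Odd k) :
    2 * Nat.card (squareTraceSet F K (2 * k)) + 1 = k := by
  obtain ⟨hcard, hpos⟩ := odd_card_and_pos_of_two_mul hk
  rw [← card_nontrivialNthRoots_eq_two_mul_natCard_squareTraceSet hk]
  exact card_nontrivialNthRoots_of_odd (neg_one_ne_one_of_odd_card K hcard)
    (hζ.pow (by positivity) rfl) hodd

theorem natCard_squareTraceSet_of_even
    (hk : 2 * k + 1 = Fintype.card F ∨ 2 * k = Fintype.card F + 1)
    (hζ : IsPrimitiveRoot ζ (2 * k)) (heven : Even k) :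
    2 * Nat.card (squareTraceSet F K (2 * k)) + 2 = k := by
  obtain ⟨hcard, hpos⟩ := odd_card_and_pos_of_two_mul hk
  rw [← card_nontrivialNthRoots_eq_two_mul_natCard_squareTraceSet hk]
  exact card_nontrivialNthRoots_of_even (neg_one_ne_one_of_odd_card K hcard)
    (hζ.pow (by positivity) rfl) heven hpos

variable (F) in
theorem four_mul_natCard_squareTraceSet_self_of_mod_four_eq_one (hq : Fintype.card F % 4 = 1) :
    4 * Nat.card (squareTraceSet F F (Fintype.card F - 1)) + 5 = Fintype.card F := by
  obtain ⟨ω, hω⟩ := exists_isPrimitiveRoot_card_sub_one F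
  have hhalf : Fintype.card F - 1 = 2 * (Fintype.card F / 2) := by omega
  rw [hhalf] at hω ⊢
  have hcount := natCard_squareTraceSet_of_even (F := F) (by omega) hω (Nat.even_iff.mpr (by omega))
  omega

variable (F) in
theorem four_mul_natCard_squareTraceSet_self_of_mod_four_eq_three (hq : Fintype.card F % 4 = 3) :
    4 * Nat.card (squareTraceSet F F (Fintype.card F - 1)) + 3 = Fintype.card F := by
  obtain ⟨ω, hω⟩ := exists_isPrimitiveRoot_card_sub_one F
  have hhalf : Fintype.card F - 1 = 2 * (Fintype.card F / 2) := by omega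
  rw [hhalf] at hω ⊢
  have hcount := natCard_squareTraceSet_of_odd (F := F) (by omega) hω (Nat.odd_iff.mpr (by omega))
  omega

theorem four_mul_natCard_squareTraceSet_of_mod_four_eq_one (hq : Fintype.card F % 4 = 1)
    (hζ : IsPrimitiveRoot ζ (Fintype.card F + 1)) :
    4 * Nat.card (squareTraceSet F K (Fintype.card F + 1)) + 1 = Fintype.card F := by
  have hhalf : Fintype.card F + 1 = 2 * ((Fintype.card F + 1) / 2) := by omega
  rw [hhalf] at hζ ⊢
  have hcount := natCard_squareTraceSet_of_odd (F := F) (by omega) hζ (Nat.odd_iff.mpr (by omega))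
  omega

theorem four_mul_natCard_squareTraceSet_of_mod_four_eq_three (hq : Fintype.card F % 4 = 3)
    (hζ : IsPrimitiveRoot ζ (Fintype.card F + 1)) :
    4 * Nat.card (squareTraceSet F K (Fintype.card F + 1)) + 3 = Fintype.card F := by
  have hhalf : Fintype.card F + 1 = 2 * ((Fintype.card F + 1) / 2) := by omega
  rw [hhalf] at hζ ⊢
  have hcount := natCard_squareTraceSet_of_even (F := F) (by omega) hζ (Nat.even_iff.mpr (by omega))
  omega

end FiniteField

theorem cast_eq_sub_div_four {K : Type*} [Field K] [CharZero K] {c q r : ℕ}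
    (h : 4 * c + r = q) : (c : K) = (q - r) / 4 := by
  rw [← h]
  push_cast
  ring

theorem square_trace_lemma_general {F E : Type*} [Field F] [Fintype F] [Field E]
    [Algebra F E] {q : ℕ} (hqF : Fintype.card F = q) {ζ : E} (hζ : IsPrimitiveRoot ζ (q + 1)) :
    (q % 4 = 1 →
      ((Nat.card {α : F // (IsSquare α ∧ α ≠ 0 ∧ α ≠ 4) ∧
          ∃ l : F, l ≠ 0 ∧ 2 - α = l + l⁻¹} : ℚ) = ((q : ℚ) - 5) / 4) ∧
      (∀ α : F, (IsSquare α ∧ α ≠ 0 ∧ α ≠ 4) →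
        ∀ l : F, l ≠ 0 → 2 - α = l + l⁻¹ → IsSquare l ∧ l ≠ 0) ∧
      ((Nat.card {α : F // (IsSquare α ∧ α ≠ 0 ∧ α ≠ 4) ∧
          ∃ l : E, l ^ (q + 1) = 1 ∧ algebraMap F E (2 - α) = l + l⁻¹} : ℚ) =
        ((q : ℚ) - 1) / 4) ∧
      (∀ α : F, (IsSquare α ∧ α ≠ 0 ∧ α ≠ 4) →
        ∀ l : E, l ^ (q + 1) = 1 → algebraMap F E (2 - α) = l + l⁻¹ →
          l ^ ((q + 1) / 2) = -1)) ∧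
    (q % 4 = 3 →
      ((Nat.card {α : F // (IsSquare α ∧ α ≠ 0 ∧ α ≠ 4) ∧
          ∃ l : F, l ≠ 1 ∧ l ≠ -1 ∧ l ≠ 0 ∧ 2 - α = l + l⁻¹} : ℚ) = ((q : ℚ) - 3) / 4) ∧
      (∀ α : F, (IsSquare α ∧ α ≠ 0 ∧ α ≠ 4) →
        ∀ l : F, l ≠ 1 → l ≠ -1 → l ≠ 0 → 2 - α = l + l⁻¹ → ¬ IsSquare l) ∧
      ((Nat.card {α : F // (IsSquare α ∧ α ≠ 0 ∧ α ≠ 4) ∧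
          ∃ l : E, l ^ (q + 1) = 1 ∧ l ≠ 1 ∧ l ≠ -1 ∧
            algebraMap F E (2 - α) = l + l⁻¹} : ℚ) = ((q : ℚ) - 3) / 4) ∧
      (∀ α : F, (IsSquare α ∧ α ≠ 0 ∧ α ≠ 4) →
        ∀ l : E, l ^ (q + 1) = 1 → l ≠ 1 → l ≠ -1 →
          algebraMap F E (2 - α) = l + l⁻¹ → l ^ ((q + 1) / 2) = 1)) := by
  subst hqF
  refine ⟨fun hq ↦ ?_, fun hq ↦ ?_⟩
  · have hodd : Odd (Fintype.card F) := Nat.odd_iff.mpr (by omega)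
    refine ⟨?_, fun α ⟨hsq, hα, _⟩ l hl h ↦ ⟨?_, hl⟩, ?_, fun α ⟨hsq, hα, _⟩ l hl h ↦ ?_⟩
    · have hcount := four_mul_natCard_squareTraceSet_self_of_mod_four_eq_one F hq
      exact_mod_cast cast_eq_sub_div_four (K := ℚ) (squareTraceSet_self (F := F) ▸ hcount)
    · rw [isSquare_iff_even_card_half_of_trace hodd hl hsq hα h, Nat.even_iff]
      omega
    · have hcount := four_mul_natCard_squareTraceSet_of_mod_four_eq_one hq hζ
      exact_mod_cast cast_eq_sub_div_four (K := ℚ) hcount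
    · rw [pow_card_add_one_half_eq_neg_one_pow_of_isSquare hodd hl hsq hα h]
      exact Odd.neg_one_pow (Nat.odd_iff.mpr (by omega))
  · have hodd : Odd (Fintype.card F) := Nat.odd_iff.mpr (by omega)
    refine ⟨?_, fun α ⟨hsq, hα, _⟩ l _ _ hl h ↦ ?_, ?_, fun α ⟨hsq, hα, _⟩ l hl _ _ h ↦ ?_⟩
    · have hcount := four_mul_natCard_squareTraceSet_self_of_mod_four_eq_three F hq
      exact_mod_cast cast_eq_sub_div_four (K := ℚ)
        (squareTraceSet_self_eq_setOf_ne_one_ne_neg_one (F := F) ▸ hcount)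
    · rw [isSquare_iff_even_card_half_of_trace hodd hl hsq hα h, Nat.not_even_iff]
      omega
    · have hcount := four_mul_natCard_squareTraceSet_of_mod_four_eq_three hq hζ
      exact_mod_cast cast_eq_sub_div_four (K := ℚ)
        (squareTraceSet_eq_setOf_ne_one_ne_neg_one (F := F) (K := E) (Nat.succ_ne_zero _) ▸ hcount)
    · rw [pow_card_add_one_half_eq_neg_one_pow_of_isSquare hodd hl hsq hα h]
      exact Even.neg_one_pow (Nat.even_iff.mpr (by omega))

/-- **Lemma (trace `2 − α` for `α` a square).**  Let `F` be a finite field with `q`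
elements (`q` odd) and `E ⊇ F` its quadratic extension with `q²` elements.  Let
`S = {α ∈ F^× : α a square, α ≠ 4}`.

(i) If `q ≡ 1 (mod 4)`: there are exactly `(q−5)/4` elements `α ∈ S` for which some
`λ ∈ F^×` satisfies `2 − α = λ + λ⁻¹`, and every such `λ` is a (nonzero) square in `F`;
and there are exactly `(q−1)/4` elements `α ∈ S` for which some `λ ∈ E^×` with
`λ^{q+1} = 1` satisfies `2 − α = λ + λ⁻¹`, and every such `λ` has `λ^{(q+1)/2} = −1`.

(ii) If `q ≡ 3 (mod 4)`: there are exactly `(q−3)/4` elements `α ∈ S` for which some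
`λ ∈ F^×` with `λ ≠ ±1` satisfies `2 − α = λ + λ⁻¹`, and every such `λ` is a nonsquare
in `F^×`; and there are exactly `(q−3)/4` elements `α ∈ S` for which some `λ ∈ E^×` with
`λ^{q+1} = 1`, `λ ≠ ±1` satisfies `2 − α = λ + λ⁻¹`, and every such `λ` has
`λ^{(q+1)/2} = 1`. -/
theorem square_trace_lemma {F E : Type*} [Field F] [Fintype F] [Field E] [Fintype E]
    [Algebra F E] {q : ℕ} (hqF : Fintype.card F = q) (hqE : Fintype.card E = q ^ 2)
    (hodd : Odd q) :
    (q % 4 = 1 →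
      ((Nat.card {α : F // (IsSquare α ∧ α ≠ 0 ∧ α ≠ 4) ∧
          ∃ l : F, l ≠ 0 ∧ 2 - α = l + l⁻¹} : ℚ) = ((q : ℚ) - 5) / 4) ∧
      (∀ α : F, (IsSquare α ∧ α ≠ 0 ∧ α ≠ 4) →
        ∀ l : F, l ≠ 0 → 2 - α = l + l⁻¹ → IsSquare l ∧ l ≠ 0) ∧
      ((Nat.card {α : F // (IsSquare α ∧ α ≠ 0 ∧ α ≠ 4) ∧
          ∃ l : E, l ^ (q + 1) = 1 ∧ algebraMap F E (2 - α) = l + l⁻¹} : ℚ) =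
        ((q : ℚ) - 1) / 4) ∧
      (∀ α : F, (IsSquare α ∧ α ≠ 0 ∧ α ≠ 4) →
        ∀ l : E, l ^ (q + 1) = 1 → algebraMap F E (2 - α) = l + l⁻¹ →
          l ^ ((q + 1) / 2) = -1)) ∧
    (q % 4 = 3 →
      ((Nat.card {α : F // (IsSquare α ∧ α ≠ 0 ∧ α ≠ 4) ∧
          ∃ l : F, l ≠ 1 ∧ l ≠ -1 ∧ l ≠ 0 ∧ 2 - α = l + l⁻¹} : ℚ) = ((q : ℚ) - 3) / 4) ∧
      (∀ α : F, (IsSquare α ∧ α ≠ 0 ∧ α ≠ 4) →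
        ∀ l : F, l ≠ 1 → l ≠ -1 → l ≠ 0 → 2 - α = l + l⁻¹ → ¬ IsSquare l) ∧
      ((Nat.card {α : F // (IsSquare α ∧ α ≠ 0 ∧ α ≠ 4) ∧
          ∃ l : E, l ^ (q + 1) = 1 ∧ l ≠ 1 ∧ l ≠ -1 ∧
            algebraMap F E (2 - α) = l + l⁻¹} : ℚ) = ((q : ℚ) - 3) / 4) ∧
      (∀ α : F, (IsSquare α ∧ α ≠ 0 ∧ α ≠ 4) →
        ∀ l : E, l ^ (q + 1) = 1 → l ≠ 1 → l ≠ -1 →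
          algebraMap F E (2 - α) = l + l⁻¹ → l ^ ((q + 1) / 2) = 1)) := by
  obtain ⟨ζ, hζ⟩ : ∃ ζ : E, IsPrimitiveRoot ζ (q + 1) :=
    exists_isPrimitiveRoot_of_dvd_card_sub_one ⟨q - 1, by rw [hqE, ← Nat.sq_sub_sq q 1, one_pow]⟩
  exact square_trace_lemma_general hqF hζ
end
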